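/- arXiv:1208.5521 — 5 statements merged into one kernel-verified Lean document; each statement's English description precedes it below -/
import Mathlib

section
/- If H^h(X) = 0 for a Hausdorff function h, then there exists a Hausdorff function g with lim_{r→0+} h(r)/g(r) = 0 such that H^g(X) = 0. -/
open Set Filter MeasureTheory ENNReal

/-- A Hausdorff (gauge) function: nondecreasing, right-continuous on `[0,∞)`,
vanishing exactly at `0`. -/
def IsHausdorffFn (h : ℝ → ℝ) : Prop :=
  (∀ r, 0 ≤ r → 0 ≤ h r) ∧ MonotoneOn h (Set.Ici 0) ∧
  (∀ r, 0 ≤ r → ContinuousWithinAt h (Set.Ici r) r) ∧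
  ∀ r, 0 ≤ r → (h r = 0 ↔ r = 0)

/-- The `h`-dimensional Hausdorff measure associated to a gauge function `h`. -/
noncomputable def hMeas (h : ℝ → ℝ) {X : Type*} [EMetricSpace X] [MeasurableSpace X]
    [BorelSpace X] : Measure X :=
  Measure.mkMetric (fun r => ENNReal.ofReal (h r.toReal))

/-- The truncations `min (a i) c` of a nonnegative summable family have arbitrarily small sum. -/
theorem exists_truncation_tsum_le {ι : Type*} {a : ι → ℝ} (ha : ∀ i, 0 ≤ a i) (hs : Summable a)
    {ε : ℝ} (hε : 0 < ε) : ∃ c, 0 < c ∧ c ≤ ε ∧ ∑' i, min (a i) c ≤ ε := by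
  have hlim : Tendsto (fun c : ℝ => ∑' i, min (a i) c) (nhdsWithin 0 (Set.Ioi 0))
      (nhds (∑' _ : ι, (0 : ℝ))) := by
    refine tendsto_tsum_of_dominated_convergence hs (fun i => ?_) ?_
    · have hc : Continuous fun c : ℝ => min (a i) c := by fun_prop
      have h0 := (hc.tendsto 0).mono_left (nhdsWithin_le_nhds (s := Set.Ioi 0))
      rwa [min_eq_right (ha i)] at h0
    · filter_upwards [self_mem_nhdsWithin] with c hc i
      rw [Real.norm_of_nonneg (le_min (ha i) (le_of_lt hc))]
      exact min_le_left _ _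
  rw [tsum_zero] at hlim
  obtain ⟨c, ⟨hc, hcε⟩, hc0⟩ := (((hlim.eventually_le_const hε).and
    ((eventually_le_nhds hε).filter_mono nhdsWithin_le_nhds)).and self_mem_nhdsWithin).exists
  exact ⟨c, hc0, hcε, hc⟩

/-- For every nonnegative summable family `a` there is a continuous monotone `φ` with
`x / φ x → 0` as `x → 0+` such that `φ ∘ a` is still summable. -/
theorem exists_summable_comp {ι : Type*} {a : ι → ℝ} (ha : ∀ i, 0 ≤ a i) (hs : Summable a) :
    ∃ φ : ℝ → ℝ, Continuous φ ∧ Monotone φ ∧ φ 0 = 0 ∧ (∀ x, 0 < x → 0 < φ x) ∧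
      Tendsto (fun x => x / φ x) (nhdsWithin 0 (Set.Ioi 0)) (nhds 0) ∧
      Summable fun i => φ (a i) := by
  choose c hc0 hc hac using fun j : ℕ =>
    exists_truncation_tsum_le ha hs (ε := (1 / 2) ^ j) (by positivity)
  have hcs : Summable c :=
    summable_geometric_two.of_nonneg_of_le (fun j => (hc0 j).le) hc
  have hnn : ∀ j x, 0 ≤ min (max x 0) (c j) := fun j x =>
    le_min (le_max_right _ _) (hc0 j).le
  have hsum : ∀ x, Summable fun j => min (max x 0) (c j) := fun x =>
    hcs.of_nonneg_of_le (fun j => hnn j x) fun j => min_le_right _ _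
  refine ⟨fun x => ∑' j, min (max x 0) (c j), ?_, ?_, ?_, ?_, ?_, ?_⟩
  · refine continuous_tsum (fun j => by fun_prop) hcs fun j x => ?_
    rw [Real.norm_of_nonneg (hnn j x)]
    exact min_le_right _ _
  · intro x y hxy
    exact (hsum x).tsum_le_tsum (fun j => by gcongr) (hsum y)
  · simp [min_eq_left (hc0 _).le]
  · intro x hx
    exact (hsum x).tsum_pos (fun j => hnn j x) 0 (lt_min (lt_max_of_lt_left hx) (hc0 0))
  · have key : Tendsto (fun x => (∑' j, min (max x 0) (c j)) / x) (nhdsWithin 0 (Set.Ioi 0))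
        atTop := by
      refine tendsto_atTop.2 fun b => ?_
      obtain ⟨N, hN⟩ := exists_nat_ge b
      have hsmall : ∀ᶠ x in nhdsWithin (0 : ℝ) (Set.Ioi 0), ∀ j ∈ Finset.range N, x ≤ c j :=
        (Filter.eventually_all_finset _).2 fun j _ =>
          (eventually_le_nhds (hc0 j)).filter_mono nhdsWithin_le_nhds
      filter_upwards [hsmall, self_mem_nhdsWithin] with x hx hx0
      have hx0 : 0 < x := hx0
      rw [le_div_iff₀ hx0]
      calc b * x ≤ N * x := by gcongr
        _ = ∑ j ∈ Finset.range N, min (max x 0) (c j) := by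
          rw [Finset.sum_congr rfl fun j hj => by
            rw [max_eq_left hx0.le, min_eq_left (hx j hj)]]
          simp
        _ ≤ ∑' j, min (max x 0) (c j) := (hsum x).sum_le_tsum _ fun j _ => hnn j x
    simpa [Function.comp_def, inv_div] using tendsto_inv_atTop_zero.comp key
  · have hprod : Summable fun p : ℕ × ι => min (max (a p.2) 0) (c p.1) := by
      rw [summable_prod_of_nonneg fun p => hnn p.1 (a p.2)]
      simp only [max_eq_left (ha _)]
      refine ⟨fun j => hs.of_nonneg_of_le (fun i => le_min (ha i) (hc0 j).le)
        fun i => min_le_left _ _, ?_⟩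
      exact summable_geometric_two.of_nonneg_of_le
        (fun j => tsum_nonneg fun i => le_min (ha i) (hc0 j).le) hac
    exact hprod.prod_symm.prod

/-- If `H^h(X) = 0`, then `X` has arbitrarily fine countable covers of arbitrarily small
`h`-sum. -/
theorem exists_cover_of_hMeas_eq_zero {X : Type*} [EMetricSpace X] [MeasurableSpace X]
    [BorelSpace X] {h : ℝ → ℝ} (hh : IsHausdorffFn h) (h0 : hMeas h (Set.univ : Set X) = 0)
    {δ : ℝ≥0∞} (hδ : 0 < δ) {ε : ℝ} (hε : 0 < ε) :
    ∃ t : ℕ → Set X, Set.univ ⊆ ⋃ n, t n ∧ (∀ n, Metric.ediam (t n) ≤ δ) ∧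
      Summable (fun n => h (Metric.ediam (t n)).toReal) ∧
      ∑' n, h (Metric.ediam (t n)).toReal ≤ ε := by
  obtain ⟨hnn, -, -, hz⟩ := hh
  rw [hMeas, Measure.mkMetric_apply] at h0
  have hlt := (le_of_eq (iSup₂_le_iff.1 h0.le δ hδ |>.antisymm bot_le)).trans_lt
    (ENNReal.ofReal_pos.2 hε)
  simp only [iInf_lt_iff] at hlt
  obtain ⟨t, hcov, hdiam, hlt⟩ := hlt
  have hterm : ∀ n, (⨆ _ : (t n).Nonempty, ENNReal.ofReal (h (Metric.ediam (t n)).toReal)) =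
      ENNReal.ofReal (h (Metric.ediam (t n)).toReal) := by
    intro n
    rcases (t n).eq_empty_or_nonempty with hn | hn
    · simp [hn, (hz 0 le_rfl).2 rfl]
    · simp [hn]
  simp only [hterm] at hlt
  have hnn' : ∀ n, 0 ≤ h (Metric.ediam (t n)).toReal := fun n => hnn _ ENNReal.toReal_nonneg
  have hs : Summable fun n => h (Metric.ediam (t n)).toReal := by
    simpa only [ENNReal.toReal_ofReal (hnn' _)] using ENNReal.summable_toReal hlt.ne_top
  refine ⟨t, hcov, hdiam, hs, ?_⟩
  rw [← ENNReal.ofReal_tsum_of_nonneg hnn' hs] at hlt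
  exact (ENNReal.ofReal_le_ofReal_iff hε.le).1 hlt.le

/-- `H^g(X) = 0` as soon as `X` has covers, of mesh tending to zero, with `g`-sums tending to
zero. -/
theorem hMeas_eq_zero_of_covers {X : Type*} [EMetricSpace X] [MeasurableSpace X]
    [BorelSpace X] {g : ℝ → ℝ} (hg : ∀ r, 0 ≤ r → 0 ≤ g r) {δ : ℕ → ℝ≥0∞}
    (hδ : Tendsto δ atTop (nhds 0)) (t : ℕ → ℕ → Set X) (hcov : ∀ k, Set.univ ⊆ ⋃ n, t k n)
    (hdiam : ∀ k n, Metric.ediam (t k n) ≤ δ k)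
    (hs : ∀ k, Summable fun n => g (Metric.ediam (t k n)).toReal)
    (hlim : Tendsto (fun k => ∑' n, g (Metric.ediam (t k n)).toReal) atTop (nhds 0)) :
    hMeas g (Set.univ : Set X) = 0 := by
  refine le_antisymm ((Measure.mkMetric_le_liminf_tsum Set.univ δ hδ t
    (Eventually.of_forall hdiam) (Eventually.of_forall hcov) _).trans_eq ?_) bot_le
  refine Tendsto.liminf_eq ?_
  simp only [← ENNReal.ofReal_tsum_of_nonneg (fun n => hg _ ENNReal.toReal_nonneg) (hs _)]
  simpa using ENNReal.tendsto_ofReal hlim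

/-- A gauge function tends to `0` from the right, through positive values. -/
theorem IsHausdorffFn.tendsto_nhdsGT_zero {h : ℝ → ℝ} (hh : IsHausdorffFn h) :
    Tendsto h (nhdsWithin 0 (Set.Ioi 0)) (nhdsWithin 0 (Set.Ioi 0)) := by
  obtain ⟨hnn, -, hcont, hz⟩ := hh
  refine tendsto_nhdsWithin_iff.2 ⟨?_, ?_⟩
  · have hlim := (hcont 0 le_rfl).mono Set.Ioi_subset_Ici_self
    rwa [ContinuousWithinAt, (hz 0 le_rfl).2 rfl] at hlim
  · filter_upwards [self_mem_nhdsWithin] with r hr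
    have hr : 0 < r := hr
    exact (hnn r hr.le).lt_of_ne fun he => hr.ne' ((hz r hr.le).1 he.symm)

/-- If `H^h(X) = 0`, then there is a gauge `g` with `g ≺ h` (i.e. `h(r)/g(r) → 0` as
`r → 0+`) such that `H^g(X) = 0`. -/
theorem stmt5 {X : Type*} [MetricSpace X] [MeasurableSpace X] [BorelSpace X]
    (h : ℝ → ℝ) (hh : IsHausdorffFn h) (h0 : hMeas h (Set.univ : Set X) = 0) :
    ∃ g : ℝ → ℝ, IsHausdorffFn g ∧
      Filter.Tendsto (fun r => h r / g r) (nhdsWithin 0 (Set.Ioi 0)) (nhds 0) ∧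
      hMeas g (Set.univ : Set X) = 0 := by
  have hδ : ∀ k : ℕ, (0 : ℝ≥0∞) < (k : ℝ≥0∞)⁻¹ := fun k =>
    ENNReal.inv_pos.2 (ENNReal.natCast_ne_top k)
  choose t hcov hdiam hs hle using fun k : ℕ =>
    exists_cover_of_hMeas_eq_zero hh h0 (hδ k) (ε := (1 / 2) ^ k) (by positivity)
  have hlim := hh.tendsto_nhdsGT_zero
  obtain ⟨hnn, hmono, hcont, hz⟩ := hh
  have hnn' : ∀ p : ℕ × ℕ, 0 ≤ h (Metric.ediam (t p.1 p.2)).toReal := fun p =>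
    hnn _ ENNReal.toReal_nonneg
  have hprod : Summable fun p : ℕ × ℕ => h (Metric.ediam (t p.1 p.2)).toReal :=
    (summable_prod_of_nonneg hnn').2 ⟨hs, summable_geometric_two.of_nonneg_of_le
      (fun k => tsum_nonneg fun n => hnn' (k, n)) hle⟩
  obtain ⟨φ, φcont, φmono, φ0, φpos, φlim, φsum⟩ := exists_summable_comp hnn' hprod
  have φnn : ∀ r, 0 ≤ r → 0 ≤ φ (h r) := fun r hr => φ0 ▸ φmono (hnn r hr)
  refine ⟨fun r => φ (h r), ⟨φnn, φmono.comp_monotoneOn hmono,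
    fun r hr => φcont.continuousAt.comp_continuousWithinAt (hcont r hr), fun r hr => ?_⟩,
    φlim.comp hlim, ?_⟩
  · rw [← hz r hr]
    refine ⟨fun he => ?_, fun he => (congrArg φ he).trans φ0⟩
    by_contra hne
    exact (φpos _ ((hnn r hr).lt_of_ne' hne)).ne' he
  · exact hMeas_eq_zero_of_covers φnn ENNReal.tendsto_inv_nat_nhds_zero t hcov hdiam
      φsum.prod_factor φsum.prod.tendsto_atTop_zero
end

section
/- For every Hausdorff function h with lim_{r→0+} h(r)/r = ∞ there exists an infinite set I ⊆ ℕ such that the compact set C_I = {x ∈ 2^ℕ : x↾I ≡ 0} satisfies H^h(C_I) > 0. -/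
open Set Filter MeasureTheory ENNReal

/-- Cantor space `2^ℕ` with the metric `d(x,y) = 2^{-min{i : x i ≠ y i}}`. -/
noncomputable instance : MetricSpace (ℕ → Bool) :=
  PiNat.metricSpaceOfDiscreteUniformity fun _ => rfl

open PiNat (cylinder firstDiff)

lemma dist_eq_half_pow_firstDiff {x y : ℕ → Bool} (hxy : x ≠ y) :
    dist x y = (1 / 2 : ℝ) ^ firstDiff x y :=
  PiNat.dist_eq_of_ne hxy

/-- The law of a single coordinate: the point mass at `false` for indices in `I`,
a fair coin for the other indices. -/
noncomputable def coordLaw (I : Set ℕ) (i : ℕ) : PMF Bool :=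
  open Classical in if i ∈ I then PMF.pure false else PMF.uniformOfFintype Bool

/-- The product measure of the coordinate laws; it is carried by the sequences vanishing
on `I`. -/
noncomputable def restrictedCoin (I : Set ℕ) : Measure (ℕ → Bool) :=
  Measure.infinitePi fun i => (coordLaw I i).toMeasure

open Classical in
lemma coordLaw_singleton_le (I : Set ℕ) (i : ℕ) (b : Bool) :
    (coordLaw I i).toMeasure {b} ≤ ENNReal.ofReal ((if i ∈ I then 2 else 1) * (1 / 2)) := by
  rw [PMF.toMeasure_apply_singleton _ _ (measurableSet_singleton b)]
  by_cases hi : i ∈ I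
  · simpa [hi] using (coordLaw I i).coe_le_one b
  · simp [coordLaw, hi, PMF.uniformOfFintype_apply]

open Classical in
lemma restrictedCoin_cylinder_le (I : Set ℕ) (x : ℕ → Bool) (n : ℕ) :
    restrictedCoin I (cylinder x n) ≤
      ENNReal.ofReal (2 ^ ((Finset.range n).filter (· ∈ I)).card * (1 / 2) ^ n) := by
  have hcyl : cylinder x n = Set.pi (Finset.range n : Set ℕ) fun i => {x i} := by
    ext y; simp [PiNat.cylinder, Set.mem_pi]
  rw [hcyl, restrictedCoin, Measure.infinitePi_pi _ fun i _ => measurableSet_singleton _]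
  refine (Finset.prod_le_prod' fun i _ => coordLaw_singleton_le I i (x i)).trans ?_
  rw [← ENNReal.ofReal_prod_of_nonneg fun i _ => by positivity, Finset.prod_mul_distrib,
    Finset.prod_ite]
  simp

lemma restrictedCoin_zeroSet (I : Set ℕ) :
    restrictedCoin I {x : ℕ → Bool | ∀ i ∈ I, x i = false} = 1 := by
  have : IsProbabilityMeasure (restrictedCoin I) := by unfold restrictedCoin; infer_instance
  have hae : ∀ᵐ x ∂restrictedCoin I, ∀ i ∈ I, x i = false := by
    refine ae_all_iff.2 fun i => ?_
    by_cases hi : i ∈ I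
    · have hmp := measurePreserving_eval_infinitePi (fun i => (coordLaw I i).toMeasure) i
      have hb : ∀ᵐ b ∂(coordLaw I i).toMeasure, b = false := by
        simp [coordLaw, hi, PMF.toMeasure_pure, ae_dirac_eq]
      filter_upwards [hmp.quasiMeasurePreserving.ae hb] with x hx _ using hx
    · exact ae_of_all _ fun x h => absurd h hi
  rw [← measure_univ (μ := restrictedCoin I)]
  exact measure_congr (eventuallyEq_univ.2 hae)

open Classical in
/-- A function tending to infinity dominates `2 ^ |I ∩ n|` for some infinite set `I`. -/
lemma exists_infinite_two_pow_card_le {g : ℕ → ℝ} (hg : Tendsto g atTop atTop) :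
    ∃ I : Set ℕ, I.Infinite ∧
      ∀ᶠ n in atTop, (2 : ℝ) ^ ((Finset.range n).filter (· ∈ I)).card ≤ g n := by
  obtain ⟨f, hf, hfg⟩ := extraction_forall_of_eventually
    (P := fun k N => ∀ n ≥ N, (2 : ℝ) ^ (k + 1) ≤ g n)
    fun k => eventually_forall_ge_atTop.2 (hg.eventually_ge_atTop _)
  refine ⟨range f, infinite_range_of_injective hf.injective, ?_⟩
  filter_upwards [hg.eventually_ge_atTop 1] with n hn
  rcases hc : ((Finset.range n).filter (· ∈ range f)).card with _ | c
  · simpa using hn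
  · refine hfg c n ?_
    by_contra! hlt
    have hsub : (Finset.range n).filter (· ∈ range f) ⊆ (Finset.range c).image f := by
      intro i hi
      obtain ⟨hin, k, rfl⟩ := Finset.mem_filter.1 hi
      exact Finset.mem_image_of_mem f
        (Finset.mem_range.2 (hf.lt_iff_lt.1 ((Finset.mem_range.1 hin).trans hlt)))
    have := (Finset.card_le_card hsub).trans Finset.card_image_le
    rw [hc, Finset.card_range] at this
    omega

/-- Mass distribution principle on Cantor space: a measure whose mass on small cylinders is
controlled by the gauge is dominated by the associated Hausdorff measure. -/
lemma le_hMeas_of_cylinder_le {h : ℝ → ℝ} (hh : IsHausdorffFn h) (μ : Measure (ℕ → Bool))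
    (N : ℕ) (hμ : ∀ n ≥ N, ∀ x, μ (cylinder x n) ≤ ENNReal.ofReal (h ((1 / 2) ^ n))) :
    μ ≤ hMeas h := by
  obtain ⟨-, hmono, hcont, hzero⟩ := hh
  refine Measure.le_mkMetric _ μ (ENNReal.ofReal ((1 / 2) ^ N))
    (ENNReal.ofReal_pos.2 (by positivity)) fun t ht => ?_
  by_cases hsub : t.Subsingleton
  · obtain rfl | ⟨x, rfl⟩ := hsub.eq_empty_or_singleton
    · simp
    have hlim : Tendsto (fun n : ℕ => ENNReal.ofReal (h ((1 / 2) ^ n))) atTop (nhds 0) := by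
      have hpow : Tendsto (fun n : ℕ => (1 / 2 : ℝ) ^ n) atTop (nhdsWithin 0 (Ici 0)) :=
        tendsto_nhdsWithin_iff.2 ⟨tendsto_pow_atTop_nhds_zero_of_lt_one (by norm_num) (by norm_num),
          Eventually.of_forall fun n => by simp⟩
      have := ENNReal.tendsto_ofReal ((hcont 0 le_rfl).tendsto.comp hpow)
      simpa [(hzero 0 le_rfl).2 rfl] using this
    have hx : μ {x} ≤ 0 := ge_of_tendsto hlim <| by
      filter_upwards [eventually_ge_atTop N] with n hn
      refine (measure_mono ?_).trans (hμ n hn x)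
      simp
    exact hx.trans zero_le
  · have hne : ∃ n, ∃ x ∈ t, ∃ y ∈ t, x ≠ y ∧ firstDiff x y = n := by
      obtain ⟨x, hx, y, hy, hxy⟩ := Set.not_subsingleton_iff.1 hsub
      exact ⟨_, x, hx, y, hy, hxy, rfl⟩
    classical
    obtain ⟨x, hx, y, hy, hxy, hn⟩ := Nat.find_spec hne
    set n := Nat.find hne
    have hcyl : t ⊆ cylinder x n := fun z hz => by
      by_cases hzx : z = x
      · exact hzx ▸ PiNat.self_mem_cylinder z n
      · exact (PiNat.mem_cylinder_iff_le_firstDiff hzx n).2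
          (Nat.find_min' hne ⟨z, hz, x, hx, hzx, rfl⟩)
    have hdiam : ENNReal.ofReal ((1 / 2) ^ n) ≤ Metric.ediam t := by
      have := Metric.edist_le_ediam_of_mem hx hy
      rwa [edist_dist, dist_eq_half_pow_firstDiff hxy, hn] at this
    have hNn : N ≤ n := by
      have := (ENNReal.ofReal_le_ofReal_iff (by positivity)).1 (hdiam.trans ht)
      exact (pow_le_pow_iff_right_of_lt_one₀ (by norm_num) (by norm_num)).1 this
    refine (measure_mono hcyl).trans ((hμ n hNn x).trans (ENNReal.ofReal_le_ofReal ?_))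
    refine hmono (by simp) ENNReal.toReal_nonneg ?_
    exact (ENNReal.ofReal_le_iff_le_toReal (ht.trans_lt ENNReal.ofReal_lt_top).ne).1 hdiam

/-- For every Hausdorff function `h` with `h(r)/r → ∞` as `r → 0+` (i.e. `h ≺ 1`) there is
an infinite `I ⊆ ℕ` with `H^h(C_I) > 0`. -/
theorem stmt11 (h : ℝ → ℝ) (hh : IsHausdorffFn h)
    (hlim : Filter.Tendsto (fun r => h r / r) (nhdsWithin 0 (Set.Ioi 0)) Filter.atTop) :
    ∃ I : Set ℕ, I.Infinite ∧
      0 < hMeas h {x : ℕ → Bool | ∀ i ∈ I, x i = false} := by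
  classical
  have hpow : Tendsto (fun n : ℕ => (1 / 2 : ℝ) ^ n) atTop (nhdsWithin 0 (Ioi 0)) :=
    tendsto_nhdsWithin_iff.2 ⟨tendsto_pow_atTop_nhds_zero_of_lt_one (by norm_num) (by norm_num),
      Eventually.of_forall fun n => by simp⟩
  obtain ⟨I, hI, hcard⟩ := exists_infinite_two_pow_card_le (hlim.comp hpow)
  refine ⟨I, hI, ?_⟩
  obtain ⟨N, hN⟩ := eventually_atTop.1 hcard
  have hle : restrictedCoin I ≤ hMeas h := by
    refine le_hMeas_of_cylinder_le hh _ N fun n hn x => ?_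
    refine (restrictedCoin_cylinder_le I x n).trans (ENNReal.ofReal_le_ofReal ?_)
    have := (le_div_iff₀ (by positivity)).1 (hN n hn)
    convert this
  calc (0 : ℝ≥0∞) < restrictedCoin I {x | ∀ i ∈ I, x i = false} := by
        rw [restrictedCoin_zeroSet]; exact one_pos
    _ ≤ _ := hle _
end

section
/- If X is a subset of Cantor space such that H^1(X × C) = 0 for every set C = C_I = {x ∈ 2^ℕ : x↾I ≡ 0} with I ⊆ ℕ infinite, then X has strong measure zero. -/
open Set Filter MeasureTheory ENNReal

theorem ENNReal.ofReal_one_half_pow (n : ℕ) : ENNReal.ofReal ((1 / 2) ^ n) = 2⁻¹ ^ n := by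
  rw [ENNReal.ofReal_pow (by norm_num), one_div, ENNReal.ofReal_inv_of_pos (by norm_num)]
  simp

open PiNat in
theorem PiNat.mem_cylinder_iff_edist_le {x y : ℕ → Bool} {n : ℕ} :
    y ∈ cylinder x n ↔ edist y x ≤ 2⁻¹ ^ n := by
  rw [mem_cylinder_iff_dist_le, ← ENNReal.ofReal_one_half_pow, edist_dist,
    ENNReal.ofReal_le_ofReal_iff (by positivity)]

open PiNat in
theorem PiNat.ediam_cylinder_le (x : ℕ → Bool) (n : ℕ) :
    Metric.ediam (cylinder x n) ≤ 2⁻¹ ^ n := by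
  refine Metric.ediam_le fun y hy z hz => mem_cylinder_iff_edist_le.1 ?_
  rwa [← mem_cylinder_iff_eq.1 hz] at hy

open PiNat in
/-- A subset of the square of Cantor space is contained in a product of two cylinders of the same
length, of diameter arbitrarily close to that of the set. -/
theorem exists_cylinder_prod_cover (E : Set ((ℕ → Bool) × (ℕ → Bool))) {δ : ℝ≥0∞} (hδ : δ ≠ 0) :
    ∃ (p q : ℕ → Bool) (m : ℕ), E ⊆ cylinder p m ×ˢ cylinder q m ∧
      2⁻¹ ^ m ≤ Metric.ediam E + δ := by
  classical
  have hex : ∃ m : ℕ, (2⁻¹ : ℝ≥0∞) ^ m ≤ Metric.ediam E + δ := by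
    obtain ⟨m, hm⟩ := ENNReal.exists_inv_two_pow_lt hδ
    exact ⟨m, hm.le.trans le_add_self⟩
  rcases E.eq_empty_or_nonempty with rfl | ⟨⟨p, q⟩, hpq⟩
  · obtain ⟨m, hm⟩ := hex
    exact ⟨fun _ => false, fun _ => false, m, empty_subset _, hm⟩
  refine ⟨p, q, Nat.find hex, ?_, Nat.find_spec hex⟩
  have agree : ∀ x y : ℕ → Bool, edist x y ≤ Metric.ediam E → x ∈ cylinder y (Nat.find hex) := by
    intro x y hxy i hi
    have hlt : Metric.ediam E + δ < 2⁻¹ ^ i := not_le.1 (Nat.find_min hex hi)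
    have hd : edist x y < 2⁻¹ ^ i := (hxy.trans le_self_add).trans_lt hlt
    by_contra hne
    have hxy' : x ≠ y := fun h => hne (by rw [h])
    have hle : firstDiff x y ≤ i := by
      by_contra hlt'
      exact hne (apply_eq_of_lt_firstDiff (not_le.1 hlt'))
    have hdist : dist x y = (1 / 2 : ℝ) ^ firstDiff x y := dist_eq_of_ne hxy'
    have hge : (1 / 2 : ℝ) ^ i ≤ dist x y := by
      rw [hdist]
      exact pow_le_pow_of_le_one (by norm_num) (by norm_num) hle
    rw [edist_dist] at hd
    refine absurd (ENNReal.ofReal_le_ofReal hge) (not_le.2 ?_)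
    rwa [ENNReal.ofReal_one_half_pow]
  rintro ⟨x, y⟩ hxy
  have h := Metric.edist_le_ediam_of_mem hxy hpq
  rw [Prod.edist_eq, max_le_iff] at h
  exact ⟨agree _ _ h.1, agree _ _ h.2⟩

open PiNat in
theorem exists_cylinder_prod_cover_of_hMeas_eq_zero {S : Set ((ℕ → Bool) × (ℕ → Bool))}
    (hS : hMeas (fun r => r) S = 0) :
    ∃ (p q : ℕ → ℕ → Bool) (m : ℕ → ℕ), S ⊆ ⋃ k, cylinder (p k) (m k) ×ˢ cylinder (q k) (m k) ∧
      ∑' k, (2⁻¹ : ℝ≥0∞) ^ m k < 1 := by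
  rw [hMeas, Measure.mkMetric_apply] at hS
  have h1 := ENNReal.iSup_eq_zero.1 hS 1
  simp only [zero_lt_one, iSup_pos] at h1
  have hhalf : (0 : ℝ≥0∞) < 2⁻¹ := by simp
  rw [← h1] at hhalf
  simp only [iInf_lt_iff] at hhalf
  obtain ⟨t, hSt, htd, hsum⟩ := hhalf
  obtain ⟨δ, hδ, hδsum⟩ := ENNReal.exists_pos_sum_of_countable (ε := 2⁻¹) (by simp) ℕ
  choose p q m hsub hm using fun k =>
    exists_cylinder_prod_cover (t k) (δ := δ k) (by exact_mod_cast (hδ k).ne')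
  refine ⟨p, q, m, hSt.trans (iUnion_mono hsub), ?_⟩
  have hterm : ∀ k, Metric.ediam (t k) =
      ⨆ _ : (t k).Nonempty, ENNReal.ofReal (Metric.ediam (t k)).toReal := by
    intro k
    rcases (t k).eq_empty_or_nonempty with h | h
    · simp [h]
    · rw [ENNReal.ofReal_toReal ((htd k).trans_lt one_lt_top).ne]
      simp [h]
  calc ∑' k, (2⁻¹ : ℝ≥0∞) ^ m k ≤ ∑' k, (Metric.ediam (t k) + δ k) := ENNReal.tsum_le_tsum hm
    _ = ∑' k, Metric.ediam (t k) + ∑' k, (δ k : ℝ≥0∞) := ENNReal.tsum_add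
    _ < 2⁻¹ + 2⁻¹ := by
      refine ENNReal.add_lt_add ?_ hδsum
      rw [tsum_congr hterm]
      exact hsum
    _ = 1 := ENNReal.inv_two_add_inv_two

open PiNat in
open scoped Classical in
/-- There is a probability measure concentrated on the sequences vanishing on `I`, which is
distributed uniformly on the remaining coordinates. -/
theorem exists_uniform_measure_vanishing_on (I : Set ℕ) :
    ∃ ν : Measure (ℕ → Bool), IsProbabilityMeasure ν ∧
      (∀ᵐ y ∂ν, ∀ i ∈ I, y i = false) ∧
      ∀ q m, 2⁻¹ ^ ((Finset.range m).filter (· ∈ I)).card * ν (cylinder q m) ≤ 2⁻¹ ^ m := by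
  let μ : ℕ → Measure Bool := fun i =>
    if i ∈ I then Measure.dirac false else (PMF.uniformOfFintype Bool).toMeasure
  have hμ : ∀ i, IsProbabilityMeasure (μ i) := by
    intro i
    dsimp only [μ]
    split_ifs <;> infer_instance
  refine ⟨Measure.infinitePi μ, inferInstance, ?_, ?_⟩
  · rw [ae_all_iff]
    intro i
    by_cases hi : i ∈ I
    · have h : ∀ᵐ b ∂(μ i), b = false := by
        simp only [μ, if_pos hi]
        rw [ae_dirac_eq]
        simp
      filter_upwards [(measurePreserving_eval_infinitePi μ i).quasiMeasurePreserving.ae h]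
        with y hy _ using hy
    · exact Eventually.of_forall fun _ h => absurd h hi
  · intro q m
    have hcyl : cylinder q m = Set.pi (Finset.range m : Set ℕ) fun i => {q i} := by
      rw [cylinder_eq_pi]
    rw [hcyl, Measure.infinitePi_pi _ fun _ _ => measurableSet_singleton _]
    have hc : (2⁻¹ : ℝ≥0∞) ^ ((Finset.range m).filter (· ∈ I)).card =
        ∏ i ∈ Finset.range m, if i ∈ I then 2⁻¹ else 1 := by
      rw [← Finset.prod_filter, Finset.prod_const]
    rw [hc, ← Finset.prod_mul_distrib]
    calc _ ≤ ∏ _i ∈ Finset.range m, (2⁻¹ : ℝ≥0∞) := by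
          refine Finset.prod_le_prod' fun i _ => ?_
          by_cases hi : i ∈ I
          · simp only [if_pos hi]
            exact mul_le_of_le_one_right' prob_le_one
          · simp only [μ, if_neg hi, one_mul]
            rw [PMF.toMeasure_apply_singleton _ _ (measurableSet_singleton _)]
            simp
      _ = _ := by simp

open PiNat in
open scoped Classical in
/-- Slicing: if `X × C_I` is `H^1`-null, then `X` is covered by cylinders which are small in the
sense of the gauge `2^{-m} ↦ 2^{-|I ∩ m|}`. -/
theorem exists_cylinder_cover_of_hMeas_prod_eq_zero {X : Set (ℕ → Bool)} {I : Set ℕ}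
    (h : hMeas (fun r => r) (X ×ˢ {x : ℕ → Bool | ∀ i ∈ I, x i = false}) = 0) :
    ∃ (K : Set ℕ) (p : ℕ → ℕ → Bool) (m : ℕ → ℕ), X ⊆ ⋃ k ∈ K, cylinder (p k) (m k) ∧
      ∑' k, K.indicator (fun k => (2⁻¹ : ℝ≥0∞) ^ ((Finset.range (m k)).filter (· ∈ I)).card) k
        < 1 := by
  obtain ⟨p, q, m, hcov, hsum⟩ := exists_cylinder_prod_cover_of_hMeas_eq_zero h
  obtain ⟨ν, hν, hνI, hνc⟩ := exists_uniform_measure_vanishing_on I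
  let c : ℕ → ℕ := fun k => ((Finset.range (m k)).filter (· ∈ I)).card
  have hmeas : ∀ k, MeasurableSet (cylinder (q k) (m k)) := fun k => by
    rw [cylinder_eq_pi]
    exact MeasurableSet.pi (Finset.countable_toSet _) fun _ _ => measurableSet_singleton _
  let f : (ℕ → Bool) → ℝ≥0∞ := fun y =>
    ∑' k, (cylinder (q k) (m k)).indicator (fun _ => (2⁻¹ : ℝ≥0∞) ^ c k) y
  have hfm : Measurable f := Measurable.tsum fun k => measurable_const.indicator (hmeas k)
  have hf : ∫⁻ y, f y ∂ν < 1 := by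
    refine lt_of_le_of_lt ?_ hsum
    rw [lintegral_tsum fun k => (measurable_const.indicator (hmeas k)).aemeasurable]
    refine ENNReal.tsum_le_tsum fun k => ?_
    rw [lintegral_indicator_const (hmeas k)]
    exact hνc _ _
  obtain ⟨y, hyN, hy⟩ := exists_notMem_null_le_lintegral hfm.aemeasurable hνI
  have hyI : ∀ i ∈ I, y i = false := not_not.1 hyN
  refine ⟨{k | y ∈ cylinder (q k) (m k)}, p, m, ?_, lt_of_le_of_lt (le_of_eq ?_) (hy.trans_lt hf)⟩
  · intro x hx
    obtain ⟨k, hk⟩ := mem_iUnion.1 (hcov (mk_mem_prod hx hyI))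
    exact mem_biUnion (x := k) hk.2 hk.1
  · exact tsum_congr fun k => rfl

/-- If `∑ k ∈ K, 2^{-c k} < 1`, then `K` can be enumerated so that the elements with `c k = j`
get indices below `2 ^ (j + 1)`, and `c` is positive on `K`. -/
theorem exists_enumeration_of_tsum_lt_one {K : Set ℕ} {c : ℕ → ℕ}
    (h : ∑' k, K.indicator (fun k => (2⁻¹ : ℝ≥0∞) ^ c k) k < 1) :
    ∃ e : ℕ → Option ℕ, (∀ k ∈ K, ∃ n, e n = some k) ∧
      ∀ n, ∀ k ∈ e n, 0 < c k ∧ n < 2 ^ (c k + 1) := by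
  classical
  have hpos : ∀ k ∈ K, 0 < c k := by
    intro k hk
    by_contra h0
    have := (ENNReal.le_tsum k).trans_lt h
    simp [hk, Nat.eq_zero_of_not_pos h0] at this
  have key : ∀ j, ∃ l : List ℕ, l.length ≤ 2 ^ j ∧ ∀ k, k ∈ l ↔ k ∈ K ∧ c k = j := by
    intro j
    obtain ⟨hfin, hcard⟩ := ENNReal.finset_card_const_le_le_of_tsum_le one_ne_top h.le
      (ε := 2⁻¹ ^ j) (by simp)
    refine ⟨(hfin.toFinset.filter fun k => k ∈ K ∧ c k = j).toList, ?_, fun k => ?_⟩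
    · rw [Finset.length_toList]
      refine (Finset.card_filter_le _ _).trans ?_
      have hinv : (1 : ℝ≥0∞) / 2⁻¹ ^ j = 2 ^ j := by
        rw [one_div, ← ENNReal.inv_pow, inv_inv]
      exact_mod_cast hcard.trans_eq hinv
    · simp only [Finset.mem_toList, Finset.mem_filter, Finite.mem_toFinset, mem_ofPred_eq,
        and_iff_right_iff_imp]
      rintro ⟨hk, rfl⟩
      simp [hk]
  choose l hlen hl using key
  refine ⟨fun n => (l (Nat.log 2 n))[n - 2 ^ Nat.log 2 n]?, fun k hk => ?_, fun n k hk => ?_⟩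
  · obtain ⟨i, hi, hik⟩ := List.getElem_of_mem ((hl (c k) k).2 ⟨hk, rfl⟩)
    have hi' := hi.trans_le (hlen (c k))
    have hlog : Nat.log 2 (2 ^ c k + i) = c k :=
      Nat.log_eq_of_pow_le_of_lt_pow (by omega) (by rw [pow_succ]; omega)
    refine ⟨2 ^ c k + i, ?_⟩
    simp only [hlog, Nat.add_sub_cancel_left]
    rw [List.getElem?_eq_getElem hi, hik]
  · obtain ⟨hkK, hck⟩ := (hl _ k).1 (List.mem_of_getElem? hk)
    refine ⟨hpos k hkK, ?_⟩
    rw [hck]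
    exact Nat.lt_pow_succ_log_self (by norm_num) n

open scoped Classical in
/-- There are infinite sets of naturals as sparse as desired. -/
theorem exists_infinite_sparse (g : ℕ → ℕ) :
    ∃ I : Set ℕ, I.Infinite ∧ ∀ n m,
      0 < ((Finset.range m).filter (· ∈ I)).card →
      n < 2 ^ (((Finset.range m).filter (· ∈ I)).card + 1) → g n ≤ m := by
  let a : ℕ → ℕ := fun j => j + ∑ n ∈ Finset.range (2 ^ (j + 2)), g n
  have ha : StrictMono a := by
    refine strictMono_nat_of_lt_succ fun j => ?_
    have : ∑ n ∈ Finset.range (2 ^ (j + 2)), g n ≤ ∑ n ∈ Finset.range (2 ^ (j + 1 + 2)), g n :=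
      Finset.sum_le_sum_of_subset
        (Finset.range_mono (Nat.pow_le_pow_right (by norm_num) (by omega)))
    simp only [a]
    omega
  refine ⟨range a, infinite_range_of_injective ha.injective, fun n m h0 hn => ?_⟩
  obtain ⟨j, hj⟩ := Nat.exists_eq_succ_of_ne_zero h0.ne'
  rw [hj] at hn
  have hgn : g n ≤ a j :=
    (Finset.single_le_sum (fun _ _ => Nat.zero_le _) (Finset.mem_range.2 hn)).trans le_add_self
  refine hgn.trans ?_
  by_contra hm
  have hsub : (Finset.range m).filter (· ∈ range a) ⊆ (Finset.range j).image a := by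
    intro i hi
    obtain ⟨him, r, rfl⟩ := Finset.mem_filter.1 hi
    refine Finset.mem_image_of_mem _ (Finset.mem_range.2 (ha.lt_iff_lt.1 ?_))
    exact (Finset.mem_range.1 him).trans (not_le.1 hm)
  have := (Finset.card_le_card hsub).trans Finset.card_image_le
  rw [hj, Finset.card_range] at this
  omega

/-- If `X ⊆ 2^ℕ` satisfies `H^1(X × C_I) = 0` for every infinite `I ⊆ ℕ`, then `X` has
strong measure zero. -/
theorem stmt13 (X : Set (ℕ → Bool))
    (hyp : ∀ I : Set ℕ, I.Infinite →
      hMeas (fun r => r)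
        (X ×ˢ {x : ℕ → Bool | ∀ i ∈ I, x i = false}) = 0) :
    ∀ ε : ℕ → ℝ, (∀ n, 0 < ε n) →
      ∃ U : ℕ → Set (ℕ → Bool), X ⊆ (⋃ n, U n) ∧
        ∀ n, EMetric.diam (U n) ≤ ENNReal.ofReal (ε n) := by
  classical
  intro ε hε
  choose g hg using fun n => ENNReal.exists_inv_two_pow_lt (ENNReal.ofReal_pos.2 (hε n)).ne'
  obtain ⟨I, hI, hsparse⟩ := exists_infinite_sparse g
  obtain ⟨K, p, m, hcov, hsum⟩ := exists_cylinder_cover_of_hMeas_prod_eq_zero (hyp I hI)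
  obtain ⟨e, heK, he⟩ := exists_enumeration_of_tsum_lt_one hsum
  refine ⟨fun n => (e n).elim ∅ fun k => PiNat.cylinder (p k) (m k), fun x hx => ?_, fun n => ?_⟩
  · obtain ⟨k, hk, hxk⟩ := mem_iUnion₂.1 (hcov hx)
    obtain ⟨n, hn⟩ := heK k hk
    exact mem_iUnion.2 ⟨n, by simpa [hn] using hxk⟩
  · change Metric.ediam ((e n).elim ∅ fun k => PiNat.cylinder (p k) (m k)) ≤ _
    rcases hn : e n with _ | k
    · simp
    · obtain ⟨hc, hnk⟩ := he n k hn
      calc Metric.ediam (PiNat.cylinder (p k) (m k)) ≤ 2⁻¹ ^ m k := PiNat.ediam_cylinder_le _ _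
        _ ≤ 2⁻¹ ^ g n := pow_le_pow_of_le_one zero_le (by simp) (hsparse n (m k) hc hnk)
        _ ≤ _ := (hg n).le
end

section
/- Let X ⊆ 2^ℕ be a set with the property that for every Hausdorff function h, X can be written as a countable increasing union of sets each with zero upper box premeasure B₀^h. Then X + N is Lebesgue-null for every Lebesgue-null set N ⊆ 2^ℕ (i.e., X is null-additive). -/
open Set Filter MeasureTheory ENNReal

/-- Covering number: least number of sets of diameter at most `δ` covering `E`. -/
noncomputable def covNum {X : Type*} [EMetricSpace X] (E : Set X) (δ : ℝ≥0∞) : ℕ∞ :=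
  sInf ((fun 𝒰 : Finset (Set X) => (𝒰.card : ℕ∞)) ''
    {𝒰 | (E ⊆ ⋃ U ∈ 𝒰, U) ∧ ∀ U ∈ 𝒰, EMetric.diam U ≤ δ})

/-- Upper box premeasure `B₀^g(E) = limsup_{r→0+} N_E(r)·g(r)`. -/
noncomputable def ubox0 {X : Type*} [EMetricSpace X] (E : Set X) (g : ℝ → ℝ) : ℝ≥0∞ :=
  Filter.limsup (fun r : ℝ => (covNum E (ENNReal.ofReal r) : ℝ≥0∞) * ENNReal.ofReal (g r))
    (nhdsWithin 0 (Set.Ioi 0))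

open scoped NNReal

/-- A summable family of positive radii has small total mass below a small enough threshold. -/
theorem exists_threshold_tsum_le {ι : Type*} {r : ι → ℝ≥0} (hpos : ∀ i, 0 < r i)
    (hsum : ∑' i, (r i : ℝ≥0∞) ≠ ∞) {ε : ℝ≥0∞} (hε : 0 < ε) {b : ℝ} (hb : 0 < b) :
    ∃ δ : ℝ, 0 < δ ∧ δ ≤ b ∧ ∑' i, {i | (r i : ℝ) < δ}.indicator (fun i => (r i : ℝ≥0∞)) i ≤ ε := by
  classical
  obtain ⟨F, hF⟩ := ((tendsto_order.1 (ENNReal.tendsto_tsum_compl_atTop_zero hsum)).2 ε hε).exists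
  obtain ⟨δ, hδ, hδb, hδF⟩ : ∃ δ : ℝ, 0 < δ ∧ δ ≤ b ∧ ∀ i ∈ F, δ ≤ r i := by
    clear hF
    induction F using Finset.induction_on with
    | empty => exact ⟨b, hb, le_rfl, by simp⟩
    | insert a s _ ih =>
      obtain ⟨δ, hδ, hδb, hs⟩ := ih
      refine ⟨min δ (r a), lt_min hδ (by exact_mod_cast hpos a), (min_le_left _ _).trans hδb, ?_⟩
      intro i hi
      rcases Finset.mem_insert.1 hi with rfl | hi
      · exact min_le_right _ _
      · exact (min_le_left _ _).trans (hs i hi)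
  refine ⟨δ, hδ, hδb, le_trans ?_ hF.le⟩
  rw [show (∑' x : {x // x ∉ F}, (r x : ℝ≥0∞)) =
    ∑' i, {i | i ∉ F}.indicator (fun i => (r i : ℝ≥0∞)) i from
      tsum_subtype {i | i ∉ F} (fun i => (r i : ℝ≥0∞))]
  refine ENNReal.tsum_le_tsum fun i => indicator_le_indicator_of_subset ?_ (fun _ => zero_le) i
  intro i hi hiF
  exact absurd (hδF i hiF) (not_le.2 hi)

/-- The superposition `∑ⱼ 2⁻ʲ min(1, |r|/δⱼ)` of truncated linear functions. -/
noncomputable def rampSum (δ : ℕ → ℝ) (r : ℝ) : ℝ := ∑' j, (1 / 2 : ℝ) ^ j * min 1 (|r| / δ j)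

theorem rampSum_term_nonneg {δ : ℕ → ℝ} (hδ : ∀ j, 0 < δ j) (r : ℝ) (j : ℕ) :
    0 ≤ (1 / 2 : ℝ) ^ j * min 1 (|r| / δ j) :=
  mul_nonneg (by positivity) (le_min zero_le_one (div_nonneg (abs_nonneg r) (hδ j).le))

theorem rampSum_term_le (r : ℝ) (j : ℕ) (δ : ℕ → ℝ) :
    (1 / 2 : ℝ) ^ j * min 1 (|r| / δ j) ≤ (1 / 2 : ℝ) ^ j :=
  mul_le_of_le_one_right (by positivity) (min_le_left _ _)

theorem summable_rampSum {δ : ℕ → ℝ} (hδ : ∀ j, 0 < δ j) (r : ℝ) :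
    Summable fun j => (1 / 2 : ℝ) ^ j * min 1 (|r| / δ j) :=
  summable_geometric_two.of_nonneg_of_le (rampSum_term_nonneg hδ r)
    fun j => rampSum_term_le r j δ

theorem pow_le_rampSum {δ : ℕ → ℝ} (hδ : ∀ j, 0 < δ j) {r : ℝ} {j : ℕ} (hr : δ j ≤ r) :
    (1 / 2 : ℝ) ^ j ≤ rampSum δ r := by
  have h := (summable_rampSum hδ r).le_tsum j fun k _ => rampSum_term_nonneg hδ r k
  have h1 : 1 ≤ |r| / δ j := (one_le_div (hδ j)).2 (hr.trans (le_abs_self r))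
  rwa [min_eq_left h1, mul_one] at h

theorem continuous_rampSum {δ : ℕ → ℝ} (hδ : ∀ j, 0 < δ j) : Continuous (rampSum δ) := by
  refine continuous_tsum (fun j => by fun_prop) summable_geometric_two fun j r => ?_
  rw [Real.norm_of_nonneg (rampSum_term_nonneg hδ r j)]
  exact rampSum_term_le r j δ

theorem isHausdorffFn_rampSum {δ : ℕ → ℝ} (hδ : ∀ j, 0 < δ j) : IsHausdorffFn (rampSum δ) := by
  refine ⟨fun r _ => tsum_nonneg (rampSum_term_nonneg hδ r), fun r hr s hs hrs => ?_,
    fun r _ => (continuous_rampSum hδ).continuousWithinAt, fun r hr => ⟨fun h => ?_, ?_⟩⟩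
  · refine (summable_rampSum hδ r).tsum_le_tsum (fun j => ?_) (summable_rampSum hδ s)
    rw [abs_of_nonneg (mem_Ici.1 hr), abs_of_nonneg (mem_Ici.1 hs)]
    have := (hδ j).le
    gcongr
  · by_contra hne
    have hterm := (summable_rampSum hδ r).le_tsum 0 fun k _ => rampSum_term_nonneg hδ r k
    have hpos : 0 < (1 / 2 : ℝ) ^ 0 * min 1 (|r| / δ 0) :=
      mul_pos (by positivity) (lt_min one_pos (div_pos (abs_pos.2 hne) (hδ 0)))
    exact absurd (hpos.trans_le hterm) (by rw [← rampSum, h]; exact lt_irrefl 0)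
  · rintro rfl
    simp [rampSum]

/-- For every summable family of positive radii there is a gauge `h` decaying so slowly
that `∑ rᵢ / h(rᵢ)` still converges. -/
theorem exists_isHausdorffFn_tsum_mul_inv_ne_top {ι : Type*} {r : ι → ℝ≥0} (hpos : ∀ i, 0 < r i)
    (hsum : ∑' i, (r i : ℝ≥0∞) ≠ ∞) :
    ∃ h, IsHausdorffFn h ∧ ∑' i, (ENNReal.ofReal (h (r i)))⁻¹ * r i ≠ ∞ := by
  obtain ⟨η, hη, hηsum⟩ := ENNReal.exists_pos_sum_of_countable' one_ne_zero ℕ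
  have hε : ∀ j, 0 < η j / 2 ^ (j + 1) := fun j =>
    ENNReal.div_pos (hη j).ne' (ENNReal.pow_ne_top ENNReal.ofNat_ne_top)
  choose δ hδ hδle hδsum using fun j : ℕ =>
    exists_threshold_tsum_le hpos hsum (hε j) (b := (1 / 2 : ℝ) ^ j) (by positivity)
  refine ⟨rampSum δ, isHausdorffFn_rampSum hδ, ?_⟩
  have hinv : ∀ {x : ℝ} {j : ℕ}, δ j ≤ x → (ENNReal.ofReal (rampSum δ x))⁻¹ ≤ 2 ^ j := by
    intro x j hx
    rw [ENNReal.inv_le_iff_inv_le, ENNReal.inv_pow]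
    calc (2⁻¹ : ℝ≥0∞) ^ j = ENNReal.ofReal ((1 / 2 : ℝ) ^ j) := by
          rw [ENNReal.ofReal_pow (by norm_num), one_div, ENNReal.ofReal_inv_of_pos two_pos]
          simp
      _ ≤ _ := ENNReal.ofReal_le_ofReal (pow_le_rampSum hδ hx)
  have hterm : ∀ i, (ENNReal.ofReal (rampSum δ (r i)))⁻¹ * r i ≤ r i +
      ∑' j, 2 ^ (j + 1) * {i | (r i : ℝ) < δ j}.indicator (fun i => (r i : ℝ≥0∞)) i := by
    intro i
    by_cases h0 : δ 0 ≤ r i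
    · refine le_add_right ?_
      simpa using mul_le_mul_left (hinv h0) (r i : ℝ≥0∞)
    · have hex : ∃ j, δ j ≤ r i := by
        obtain ⟨j, hj⟩ := exists_pow_lt_of_lt_one (NNReal.coe_pos.2 (hpos i))
          (by norm_num : (1 / 2 : ℝ) < 1)
        exact ⟨j, (hδle j).trans hj.le⟩
      classical
      obtain ⟨k, hk⟩ : ∃ k, Nat.find hex = k + 1 :=
        Nat.exists_eq_succ_of_ne_zero fun h => h0 (h ▸ Nat.find_spec hex)
      have hk1 : δ (k + 1) ≤ r i := hk ▸ Nat.find_spec hex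
      have hk2 : (r i : ℝ) < δ k := not_le.1 (Nat.find_min hex (by omega))
      refine le_add_left (le_trans ?_ (ENNReal.le_tsum k))
      rw [indicator_of_mem (by exact hk2)]
      exact mul_le_mul_left (hinv hk1) _
  refine ne_top_of_le_ne_top ?_ (ENNReal.tsum_le_tsum hterm)
  rw [ENNReal.tsum_add, ENNReal.tsum_comm]
  refine ENNReal.add_ne_top.2 ⟨hsum, ne_top_of_le_ne_top ENNReal.one_ne_top (le_trans ?_ hηsum.le)⟩
  refine ENNReal.tsum_le_tsum fun j => ?_
  rw [ENNReal.tsum_mul_left]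
  calc _ ≤ 2 ^ (j + 1) * (η j / 2 ^ (j + 1)) := mul_le_mul_right (hδsum j) _
    _ = η j := ENNReal.mul_div_cancel (by simp) (by finiteness)

/-- A set of zero length lies in the limsup of a countable family of sets whose diameters are
bounded by positive radii with finite sum. -/
theorem exists_cover_of_hMeas_eq_zero_s16 {X : Type*} [EMetricSpace X] [MeasurableSpace X]
    [BorelSpace X] {N : Set X} (hN : hMeas (fun r => r) N = 0) :
    ∃ (T : ℕ × ℕ → Set X) (r : ℕ × ℕ → ℝ≥0), (∀ i, 0 < r i) ∧
      ∑' i, (r i : ℝ≥0∞) ≠ ∞ ∧ (∀ i, Metric.ediam (T i) ≤ r i) ∧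
      ∀ F : Finset (ℕ × ℕ), ∀ x ∈ N, ∃ i ∉ F, x ∈ T i := by
  obtain ⟨η, hη, hηsum⟩ := ENNReal.exists_pos_sum_of_countable one_ne_zero (ℕ × ℕ)
  obtain ⟨θ, hθ, hθsum⟩ := ENNReal.exists_pos_sum_of_countable' one_ne_zero ℕ
  have hcov : ∀ n, ∃ t : ℕ → Set X, N ⊆ iUnion t ∧ (∀ k, Metric.ediam (t k) ≤ 1) ∧
      ∑' k, Metric.ediam (t k) < θ n := by
    intro n
    rw [hMeas, Measure.mkMetric_apply] at hN
    have h1 := (ENNReal.iSup_eq_zero.1 (ENNReal.iSup_eq_zero.1 hN 1) one_pos).trans_lt (hθ n)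
    simp only [iInf_lt_iff] at h1
    obtain ⟨t, ht, htd, hlt⟩ := h1
    refine ⟨t, ht, htd, lt_of_le_of_lt (ENNReal.tsum_le_tsum fun k => ?_) hlt⟩
    rcases (t k).eq_empty_or_nonempty with h | h
    · simp [h]
    · rw [iSup_pos h, ENNReal.ofReal_toReal (ne_top_of_le_ne_top ENNReal.one_ne_top (htd k))]
  choose t ht htd hlt using hcov
  have hne : ∀ i : ℕ × ℕ, Metric.ediam (t i.1 i.2) ≠ ∞ := fun i =>
    ne_top_of_le_ne_top ENNReal.one_ne_top (htd i.1 i.2)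
  refine ⟨fun i => t i.1 i.2, fun i => (Metric.ediam (t i.1 i.2)).toNNReal + η i,
    fun i => add_pos_of_nonneg_of_pos zero_le (hη i), ?_, fun i => ?_, fun F x hx => ?_⟩
  · simp only [ENNReal.coe_add, ENNReal.coe_toNNReal (hne _)]
    rw [ENNReal.tsum_add, ENNReal.tsum_prod']
    refine ENNReal.add_ne_top.2 ⟨?_, hηsum.ne_top⟩
    exact ne_top_of_le_ne_top hθsum.ne_top (ENNReal.tsum_le_tsum fun n => (hlt n).le)
  · rw [ENNReal.coe_add, ENNReal.coe_toNNReal (hne i)]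
    exact le_self_add
  · obtain ⟨n, hn⟩ := Infinite.exists_notMem_finset (F.image Prod.fst)
    obtain ⟨k, hk⟩ := mem_iUnion.1 (ht n hx)
    exact ⟨(n, k), fun h => hn (Finset.mem_image_of_mem Prod.fst h), hk⟩

/-- A set of zero upper box premeasure has, at every small scale `r`, a cover by at most `1 / h r`
sets of diameter at most `r`. -/
theorem exists_finset_cover_of_ubox0_eq_zero {X : Type*} [EMetricSpace X] {E : Set X} {h : ℝ → ℝ}
    (hh : IsHausdorffFn h) (hE : ubox0 E h = 0) :
    ∀ᶠ r : ℝ in nhdsWithin 0 (Ioi 0), ∃ 𝒰 : Finset (Set X), E ⊆ ⋃ U ∈ 𝒰, U ∧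
      (∀ U ∈ 𝒰, Metric.ediam U ≤ ENNReal.ofReal r) ∧
      (𝒰.card : ℝ≥0∞) ≤ (ENNReal.ofReal (h r))⁻¹ := by
  have hlt : ubox0 E h < 1 := hE ▸ one_pos
  filter_upwards [eventually_lt_of_limsup_lt hlt, self_mem_nhdsWithin] with r hr hr0
  have hpos : 0 < h r := lt_of_le_of_ne (hh.1 r hr0.le) fun he =>
    hr0.ne' ((hh.2.2.2 r hr0.le).1 he.symm)
  have hcov : covNum E (ENNReal.ofReal r) ≠ ⊤ := by
    intro htop
    rw [htop, ENat.toENNReal_top, ENNReal.top_mul (ENNReal.ofReal_pos.2 hpos).ne'] at hr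
    exact not_top_lt hr
  have hne : ((fun 𝒰 : Finset (Set X) => (𝒰.card : ℕ∞)) ''
      {𝒰 | (E ⊆ ⋃ U ∈ 𝒰, U) ∧ ∀ U ∈ 𝒰, Metric.ediam U ≤ ENNReal.ofReal r}).Nonempty := by
    by_contra hemp
    rw [not_nonempty_iff_eq_empty] at hemp
    exact hcov ((congrArg sInf hemp).trans sInf_empty)
  obtain ⟨𝒰, ⟨hU, hUd⟩, hcard⟩ := csInf_mem hne
  refine ⟨𝒰, hU, hUd, ENNReal.le_inv_iff_mul_le.2 ?_⟩
  have hc : covNum E (ENNReal.ofReal r) = (𝒰.card : ℕ∞) := hcard.symm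
  rw [hc, ENat.toENNReal_coe] at hr
  exact hr.le

/-- Coordinatewise addition mod `2` is nonexpanding for the maximum distance. -/
theorem dist_xor_le (x x' y y' : ℕ → Bool) :
    dist (fun i => xor (x i) (y i)) (fun i => xor (x' i) (y' i)) ≤ max (dist x x') (dist y y') := by
  set u := fun i => xor (x i) (y i) with hu
  set v := fun i => xor (x' i) (y' i) with hv
  rcases eq_or_ne u v with huv | huv
  · rw [huv, dist_self]
    exact le_max_of_le_left dist_nonneg
  have key : ∀ {a b : ℕ → Bool}, a (PiNat.firstDiff u v) ≠ b (PiNat.firstDiff u v) →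
      dist u v ≤ dist a b := by
    intro a b hab
    have hle : PiNat.firstDiff a b ≤ PiNat.firstDiff u v :=
      not_lt.1 fun hlt => hab (PiNat.apply_eq_of_lt_firstDiff hlt)
    have h1 : dist u v = (1 / 2 : ℝ) ^ PiNat.firstDiff u v := PiNat.dist_eq_of_ne huv
    have h2 : dist a b = (1 / 2 : ℝ) ^ PiNat.firstDiff a b :=
      PiNat.dist_eq_of_ne fun h => hab (congrFun h _)
    rw [h1, h2]
    exact pow_le_pow_of_le_one (by norm_num) (by norm_num) hle
  by_cases hx : x (PiNat.firstDiff u v) = x' (PiNat.firstDiff u v)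
  · refine le_max_of_le_right (key fun hy => PiNat.apply_firstDiff_ne huv ?_)
    simp only [hu, hv] at hx hy ⊢
    rw [hx, hy]
  · exact le_max_of_le_left (key hx)

theorem ediam_image2_xor_le {U T : Set (ℕ → Bool)} {d : ℝ≥0∞} (hU : Metric.ediam U ≤ d)
    (hT : Metric.ediam T ≤ d) :
    Metric.ediam (image2 (fun x y : ℕ → Bool => fun i => xor (x i) (y i)) U T) ≤ d := by
  refine Metric.ediam_le ?_
  rintro _ ⟨x, hx, y, hy, rfl⟩ _ ⟨x', hx', y', hy', rfl⟩
  refine le_trans ?_ (max_le (Metric.edist_le_of_ediam_le hx hx' hU)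
    (Metric.edist_le_of_ediam_le hy hy' hT))
  simp only [edist_dist]
  rw [← ENNReal.ofReal_max]
  exact ENNReal.ofReal_le_ofReal (dist_xor_le x x' y y')

/-- If `E` is covered by few sets of diameter `rᵢ` for almost all `i`, and `N` lies in the limsup of
sets of diameter at most `rᵢ`, then `E + N` has zero length. -/
theorem hMeas_image2_xor_eq_zero {ι : Type*} [Countable ι] {E N : Set (ℕ → Bool)}
    {T : ι → Set (ℕ → Bool)} {r : ι → ℝ≥0} {c : ι → ℝ≥0∞} (hsum : ∑' i, (r i : ℝ≥0∞) ≠ ∞)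
    (hc : ∑' i, c i * r i ≠ ∞) (hT : ∀ i, Metric.ediam (T i) ≤ r i)
    (hN : ∀ F : Finset ι, ∀ x ∈ N, ∃ i ∉ F, x ∈ T i)
    (hE : ∀ᶠ i in cofinite, ∃ 𝒰 : Finset (Set (ℕ → Bool)), E ⊆ ⋃ U ∈ 𝒰, U ∧
      (∀ U ∈ 𝒰, Metric.ediam U ≤ r i) ∧ (𝒰.card : ℝ≥0∞) ≤ c i) :
    hMeas (fun r => r) (image2 (fun x y : ℕ → Bool => fun i => xor (x i) (y i)) E N) = 0 := by
  classical
  choose! 𝒰 h𝒰 using fun i (hi : ∃ 𝒰 : Finset (Set (ℕ → Bool)), E ⊆ ⋃ U ∈ 𝒰, U ∧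
    (∀ U ∈ 𝒰, Metric.ediam U ≤ r i) ∧ (𝒰.card : ℝ≥0∞) ≤ c i) => hi
  have hgood : ∀ᶠ F : Finset ι in atTop, ∀ i ∉ F, E ⊆ ⋃ U ∈ 𝒰 i, U ∧
      (∀ U ∈ 𝒰 i, Metric.ediam U ≤ r i) ∧ ((𝒰 i).card : ℝ≥0∞) ≤ c i := by
    filter_upwards [eventually_ge_atTop (Set.Finite.toFinset (eventually_cofinite.1 hE))]
      with F hF i hi
    refine h𝒰 i (by_contra fun hbad => hi (hF ?_))
    simpa using hbad
  have htail := ENNReal.tendsto_tsum_compl_atTop_zero hsum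
  have hctail := ENNReal.tendsto_tsum_compl_atTop_zero hc
  have hdiam : ∀ᶠ F : Finset ι in atTop, ∀ p : Σ i : {i // i ∉ F}, {U // U ∈ 𝒰 i},
      Metric.ediam (image2 (fun x y : ℕ → Bool => fun i => xor (x i) (y i)) p.2 (T p.1))
        ≤ r p.1 := by
    filter_upwards [hgood] with F hF p
    exact ediam_image2_xor_le ((hF p.1 p.1.2).2.1 _ p.2.2) (hT _)
  have hle := Measure.mkMetric_le_liminf_tsum
    (ι := fun F : Finset ι => Σ i : {i // i ∉ F}, {U // U ∈ 𝒰 i})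
    (image2 (fun x y : ℕ → Bool => fun i => xor (x i) (y i)) E N)
    _ htail
    (fun F p => image2 (fun x y : ℕ → Bool => fun i => xor (x i) (y i)) p.2 (T p.1))
    (by
      filter_upwards [hdiam] with F hF p
      exact (hF p).trans (ENNReal.le_tsum (f := fun i : {i // i ∉ F} => (r i : ℝ≥0∞)) p.1))
    (by
      filter_upwards [hgood] with F hF
      rintro _ ⟨x, hx, y, hy, rfl⟩
      obtain ⟨i, hi, hyi⟩ := hN F y hy
      obtain ⟨U, hU, hxU⟩ := mem_iUnion₂.1 ((hF i hi).1 hx)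
      exact mem_iUnion.2 ⟨⟨⟨i, hi⟩, ⟨U, hU⟩⟩, mem_image2_of_mem hxU hyi⟩)
    (fun r => ENNReal.ofReal r.toReal)
  refine le_antisymm (hle.trans ?_) zero_le
  rw [← hctail.liminf_eq]
  refine liminf_le_liminf ?_
  filter_upwards [hgood, hdiam] with F hF hdF
  rw [ENNReal.tsum_sigma']
  refine ENNReal.tsum_le_tsum fun i => ?_
  calc _ ≤ ∑' _ : {U // U ∈ 𝒰 i}, (r i : ℝ≥0∞) :=
        ENNReal.tsum_le_tsum fun U => ENNReal.ofReal_toReal_le.trans (hdF ⟨i, U⟩)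
    _ = (𝒰 i).card * (r i : ℝ≥0∞) := by simp [tsum_fintype]
    _ ≤ c i * r i := mul_le_mul_left (hF i i.2).2.2 _

/-- Summable positive radii tend to `0` from the right. -/
theorem tendsto_cofinite_nhdsWithin_Ioi {ι : Type*} {r : ι → ℝ≥0} (hpos : ∀ i, 0 < r i)
    (hsum : ∑' i, (r i : ℝ≥0∞) ≠ ∞) :
    Tendsto (fun i => (r i : ℝ)) cofinite (nhdsWithin 0 (Ioi 0)) :=
  tendsto_nhdsWithin_iff.2 ⟨NNReal.tendsto_coe.2
    (NNReal.tendsto_cofinite_zero_of_summable (ENNReal.tsum_coe_ne_top_iff_summable.1 hsum)),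
    Eventually.of_forall fun i => NNReal.coe_pos.2 (hpos i)⟩

/-- If `X ⊆ 2^ℕ` is, for every Hausdorff function `h`, a countable increasing union of sets
of zero upper box premeasure `B₀^h`, then `X` is null-additive: `X + N` is null (w.r.t. the
Haar/product measure, which is `H^1`) for every null `N`. -/
theorem stmt16 (X : Set (ℕ → Bool))
    (hyp : ∀ h : ℝ → ℝ, IsHausdorffFn h →
      ∃ Xn : ℕ → Set (ℕ → Bool), Monotone Xn ∧ (⋃ n, Xn n) = X ∧
        ∀ n, ubox0 (Xn n) h = 0) :
    ∀ N : Set (ℕ → Bool), hMeas (fun r => r) N = 0 →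
      hMeas (fun r => r)
        (Set.image2 (fun x y : ℕ → Bool => fun i => xor (x i) (y i)) X N) = 0 := by
  intro N hN
  obtain ⟨T, r, hpos, hsum, hT, hlimsup⟩ := exists_cover_of_hMeas_eq_zero_s16 hN
  obtain ⟨h, hh, hc⟩ := exists_isHausdorffFn_tsum_mul_inv_ne_top hpos hsum
  obtain ⟨Xn, -, rfl, hXn⟩ := hyp h hh
  rw [image2_iUnion_left]
  refine measure_iUnion_null fun n => ?_
  refine hMeas_image2_xor_eq_zero (c := fun i => (ENNReal.ofReal (h (r i)))⁻¹) hsum hc hT hlimsup ?_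
  filter_upwards [(tendsto_cofinite_nhdsWithin_Ioi hpos hsum).eventually
    (exists_finset_cover_of_ubox0_eq_zero hh (hXn n))] with i hi
  rwa [ENNReal.ofReal_coe_nnreal] at hi
end

section
/- Suppose X ⊆ 2^ℕ is null-additive, i.e., X + N is μ-null for every μ-null N, where μ is the Haar product measure on the Cantor group. Then for every Hausdorff function h, X is a countable increasing union of sets X_n with limsup_{r→0} N_{X_n}(r)·h(r) ≤ 1 (so X has σ-finite, indeed zero, packing-type dimension for every gauge). -/
open Set Filter MeasureTheory ENNReal

open ProbabilityTheory Topology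

/-- The uniform probability measure on `Bool`. -/
noncomputable def coin : Measure Bool := (2 : ℝ≥0∞)⁻¹ • Measure.count

instance : IsProbabilityMeasure coin :=
  ⟨by rw [coin, Measure.smul_apply, Measure.count_univ]; simp [ENNReal.inv_mul_cancel]⟩

lemma coin_singleton (b : Bool) : coin {b} = 2⁻¹ := by
  simp [coin]

/-- The fair-coin product measure on Cantor space. -/
noncomputable def haarCantor : Measure (ℕ → Bool) := Measure.infinitePi fun _ => coin

instance : IsProbabilityMeasure haarCantor := by
  unfold haarCantor; infer_instance

/-- The initial segment of length `m` of a point of Cantor space. -/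
def initSeg (m : ℕ) (x : ℕ → Bool) : Fin m → Bool := fun i => x i

lemma measurable_initSeg (m : ℕ) : Measurable (initSeg m) := by
  unfold initSeg; fun_prop

lemma continuous_initSeg (m : ℕ) : Continuous (initSeg m) := by
  unfold initSeg; fun_prop

lemma preimage_image_restrict {S : Finset ℕ} {C : Set (ℕ → Bool)}
    (hC : ∀ y z : ℕ → Bool, (∀ i ∈ S, y i = z i) → y ∈ C → z ∈ C) :
    (fun (y : ℕ → Bool) (i : S) => y i) ⁻¹' ((fun (y : ℕ → Bool) (i : S) => y i) '' C) = C := by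
  refine subset_antisymm ?_ (subset_preimage_image _ _)
  rintro z ⟨y, hy, hyz⟩
  exact hC y z (fun i hi => congrFun hyz ⟨i, hi⟩) hy

lemma haarCantor_inter {S T : Finset ℕ} (hST : Disjoint S T) {C D : Set (ℕ → Bool)}
    (hC : ∀ y z : ℕ → Bool, (∀ i ∈ S, y i = z i) → y ∈ C → z ∈ C)
    (hD : ∀ y z : ℕ → Bool, (∀ i ∈ T, y i = z i) → y ∈ D → z ∈ D) :
    haarCantor (C ∩ D) = haarCantor C * haarCantor D := by
  have hind : iIndepFun (fun (i : ℕ) (y : ℕ → Bool) => y i) haarCantor :=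
    iIndepFun_infinitePi (X := fun _ b => b) fun _ => measurable_id
  have h := hind.indepFun_finset S T hST fun i => measurable_pi_apply i
  have := h.measure_inter_preimage_eq_mul _ _
    (MeasurableSet.of_discrete (s := (fun (y : ℕ → Bool) (i : S) => y i) '' C))
    (MeasurableSet.of_discrete (s := (fun (y : ℕ → Bool) (i : T) => y i) '' D))
  rwa [preimage_image_restrict hC, preimage_image_restrict hD] at this

lemma measurableSet_of_finitely_determined {S : Finset ℕ} {C : Set (ℕ → Bool)}
    (hC : ∀ y z : ℕ → Bool, (∀ i ∈ S, y i = z i) → y ∈ C → z ∈ C) : MeasurableSet C := by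
  rw [← preimage_image_restrict hC]
  exact measurableSet_preimage (by fun_prop) MeasurableSet.of_discrete

lemma haarCantor_eqOn (S : Finset ℕ) (x : ℕ → Bool) :
    haarCantor {y | ∀ i ∈ S, y i = x i} = 2⁻¹ ^ S.card := by
  have : {y : ℕ → Bool | ∀ i ∈ S, y i = x i} = Set.pi S fun i => {x i} := by
    ext y; simp [Set.mem_pi]
  rw [this, haarCantor, Measure.infinitePi_pi _ fun _ _ => MeasurableSet.of_discrete]
  simp [coin_singleton]

lemma haarCantor_initSeg_fiber (m : ℕ) (v : Fin m → Bool) :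
    haarCantor (initSeg m ⁻¹' {v}) = 2⁻¹ ^ m := by
  have := haarCantor_eqOn (Finset.range m) fun i => if h : i < m then v ⟨i, h⟩ else false
  rw [Finset.card_range] at this
  rw [← this]
  congr 1
  ext y
  simp only [mem_preimage, mem_singleton_iff, funext_iff, initSeg, Fin.forall_iff, mem_ofPred_eq,
    Finset.mem_range]
  refine forall₂_congr fun i hi => ?_
  simp [hi]

lemma dist_le_of_initSeg_eq {m : ℕ} {x y : ℕ → Bool} (h : initSeg m x = initSeg m y) :
    dist x y ≤ (1 / 2 : ℝ) ^ m :=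
  PiNat.mem_cylinder_iff_dist_le.1 fun i hi => congrFun h ⟨i, hi⟩

lemma initSeg_eq_of_dist_le {m : ℕ} {x y : ℕ → Bool} (h : dist x y ≤ (1 / 2 : ℝ) ^ m) :
    initSeg m x = initSeg m y :=
  funext fun i => (PiNat.mem_cylinder_iff_dist_le (E := fun _ => Bool)).2 h i i.2

lemma ediam_initSeg_fiber_le (m : ℕ) (v : Fin m → Bool) :
    Metric.ediam (initSeg m ⁻¹' {v}) ≤ ENNReal.ofReal ((1 / 2 : ℝ) ^ m) := by
  refine Metric.ediam_le fun x hx y hy => ?_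
  rw [edist_dist]
  exact ENNReal.ofReal_le_ofReal (dist_le_of_initSeg_eq (hx.trans hy.symm))

lemma ofReal_half_pow (m : ℕ) : ENNReal.ofReal ((1 / 2 : ℝ) ^ m) = 2⁻¹ ^ m := by
  rw [ENNReal.ofReal_pow (by norm_num), one_div, ENNReal.ofReal_inv_of_pos (by norm_num)]
  simp

lemma ediam_cantor_le_one (s : Set (ℕ → Bool)) : Metric.ediam s ≤ 1 := by
  refine Metric.ediam_le fun x _ y _ => ?_
  rw [edist_dist, ← ENNReal.ofReal_one]
  exact ENNReal.ofReal_le_ofReal (PiNat.dist_le_one x y)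

lemma haarCantor_le_ediam (s : Set (ℕ → Bool)) : haarCantor s ≤ Metric.ediam s := by
  classical
  rcases s.eq_empty_or_nonempty with rfl | ⟨x, hx⟩
  · simp
  have key : ∀ m : ℕ, (∀ y ∈ s, initSeg m y = initSeg m x) → haarCantor s ≤ 2⁻¹ ^ m := by
    intro m hm
    rw [← haarCantor_initSeg_fiber m (initSeg m x)]
    exact measure_mono hm
  by_cases hall : ∀ m, ∀ y ∈ s, initSeg m y = initSeg m x
  · refine (ge_of_tendsto' (ENNReal.tendsto_pow_atTop_nhds_zero_of_lt_one (r := 2⁻¹) (by simp))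
      fun m => key m (hall m)).trans zero_le
  · push Not at hall
    obtain ⟨n, hn⟩ : ∃ n, Nat.find hall = n + 1 := by
      refine Nat.exists_eq_succ_of_ne_zero fun h0 => ?_
      obtain ⟨y, -, hy⟩ := Nat.find_spec hall
      exact hy (funext fun i => absurd i.2 (by simp [h0]))
    have hmin := Nat.find_min hall (m := n) (by omega)
    push Not at hmin
    obtain ⟨y, hy, hyx⟩ := Nat.find_spec hall
    rw [hn] at hyx
    refine (key n hmin).trans (le_trans ?_ (Metric.edist_le_ediam_of_mem hy hx))
    have hne : y ≠ x := fun h => hyx (by rw [h])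
    have hd : dist y x = (1 / 2 : ℝ) ^ PiNat.firstDiff y x :=
      PiNat.dist_eq_of_ne (E := fun _ => Bool) hne
    have hle : PiNat.firstDiff y x ≤ n := by
      by_contra! hlt
      exact hyx (initSeg_eq_of_dist_le
        (hd.trans_le (pow_le_pow_of_le_one (by norm_num) (by norm_num) hlt)))
    rw [← ofReal_half_pow, edist_dist, hd]
    exact ENNReal.ofReal_le_ofReal (pow_le_pow_of_le_one (by norm_num) (by norm_num) hle)

lemma hMeas_id_eq : (hMeas (fun r => r) : Measure (ℕ → Bool)) = haarCantor := by
  have hid : ∀ s : Set (ℕ → Bool),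
      ENNReal.ofReal (Metric.ediam s).toReal = Metric.ediam s := fun s =>
    ENNReal.ofReal_toReal (ne_top_of_le_ne_top ENNReal.one_ne_top (ediam_cantor_le_one s))
  have hle : haarCantor ≤ (hMeas (fun r => r) : Measure (ℕ → Bool)) :=
    Measure.le_mkMetric _ _ 1 one_pos fun s _ => by
      simpa only [hid] using haarCantor_le_ediam s
  have huniv : (hMeas (fun r => r) : Measure (ℕ → Bool)) univ ≤ 1 := by
    have hr : Tendsto (fun m : ℕ => (2⁻¹ : ℝ≥0∞) ^ m) atTop (𝓝 0) :=
      ENNReal.tendsto_pow_atTop_nhds_zero_of_lt_one (by simp)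
    have hdiam : ∀ m (v : Fin m → Bool), Metric.ediam (initSeg m ⁻¹' {v}) ≤ 2⁻¹ ^ m :=
      fun m v => (ediam_initSeg_fiber_le m v).trans_eq (ofReal_half_pow m)
    refine (Measure.mkMetric_le_liminf_sum univ _ hr (fun m (v : Fin m → Bool) =>
      initSeg m ⁻¹' {v}) (Eventually.of_forall hdiam)
      (Eventually.of_forall fun m x _ => mem_iUnion.2 ⟨initSeg m x, rfl⟩) _).trans ?_
    refine liminf_le_of_le (by isBoundedDefault) fun b hb => ?_
    obtain ⟨m, hm⟩ := hb.exists
    refine hm.trans ?_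
    simp only [hid]
    refine (Finset.sum_le_sum fun v _ => hdiam m v).trans ?_
    simp [← mul_pow, ENNReal.mul_inv_cancel]
  have : IsFiniteMeasure (hMeas (fun r => r) : Measure (ℕ → Bool)) :=
    ⟨huniv.trans_lt ENNReal.one_lt_top⟩
  exact (Measure.eq_of_le_of_measure_univ_eq hle
    (le_antisymm (hle _) (huniv.trans_eq measure_univ.symm))).symm

/-- The points `y` whose entries at the locations `e v j`, with `v` the initial segment of `y`
of length `m`, all vanish. -/
def lookupZero {m p : ℕ} (e : (Fin m → Bool) → Fin p → ℕ) : Set (ℕ → Bool) :=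
  {y | ∀ j, y (e (initSeg m y) j) = false}

/-- Coordinatewise addition modulo two. -/
def cantorAdd (x y : ℕ → Bool) : ℕ → Bool := fun i => xor (x i) (y i)

lemma cantorAdd_cantorAdd (x y : ℕ → Bool) : cantorAdd x (cantorAdd x y) = y := by
  funext i; simp [cantorAdd]

lemma continuous_cantorAdd (x : ℕ → Bool) : Continuous (cantorAdd x) := by
  refine continuous_pi fun i => ?_
  exact (continuous_of_discreteTopology (f := xor (x i))).comp (continuous_apply i)

section lookup

variable {m p : ℕ} {e : (Fin m → Bool) → Fin p → ℕ}

lemma lookupZero_eq_iUnion : lookupZero e =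
    ⋃ v, initSeg m ⁻¹' {v} ∩ ⋂ j, (fun y : ℕ → Bool => y (e v j)) ⁻¹' {false} := by
  ext y; simp [lookupZero]

lemma isOpen_lookupZero : IsOpen (lookupZero e) := by
  rw [lookupZero_eq_iUnion]
  exact isOpen_iUnion fun v => ((isOpen_discrete _).preimage (continuous_initSeg m)).inter
    (isOpen_iInter_of_finite fun j => (isOpen_discrete _).preimage (continuous_apply _))

/-- The lookup locations of `x + y` when `y` has initial segment `v`. -/
def lookupSet (e : (Fin m → Bool) → Fin p → ℕ) (v : Fin m → Bool) (x : ℕ → Bool) : Finset ℕ :=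
  Finset.univ.image (e fun i => xor (x i) (v i))

lemma cantorAdd_mem_lookupZero_iff {x y : ℕ → Bool} :
    cantorAdd x y ∈ lookupZero e ↔ ∀ i ∈ lookupSet e (initSeg m y) x, y i = x i := by
  have h : initSeg m (cantorAdd x y) = fun i : Fin m => xor (x i) (initSeg m y i) := rfl
  simp only [lookupZero, mem_ofPred_eq, lookupSet, Finset.mem_image, Finset.mem_univ, true_and,
    forall_exists_index, forall_apply_eq_imp_iff, h]
  refine forall_congr' fun j => ?_
  simpa [cantorAdd] using eq_comm

lemma card_lookupSet (he : Function.Injective fun q : (Fin m → Bool) × Fin p => e q.1 q.2)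
    (v : Fin m → Bool) (x : ℕ → Bool) : (lookupSet e v x).card = p := by
  rw [lookupSet, Finset.card_image_of_injective _ fun j k hjk => ?_, Finset.card_fin]
  exact (Prod.ext_iff.1 (@he (_, j) (_, k) hjk)).2


lemma disjoint_range_lookupSet (hm : ∀ v j, m ≤ e v j) (v : Fin m → Bool) (x : ℕ → Bool) :
    Disjoint (Finset.range m) (lookupSet e v x) := by
  rw [Finset.disjoint_left]
  intro i hi hi'
  obtain ⟨j, -, rfl⟩ := Finset.mem_image.1 hi'
  exact absurd (hm _ j) (not_le.2 (Finset.mem_range.1 hi))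

lemma disjoint_lookupSet (he : Function.Injective fun q : (Fin m → Bool) × Fin p => e q.1 q.2)
    (v : Fin m → Bool) {x x' : ℕ → Bool} (hx : initSeg m x ≠ initSeg m x') :
    Disjoint (lookupSet e v x) (lookupSet e v x') := by
  rw [Finset.disjoint_left]
  intro i hi hi'
  obtain ⟨j, -, rfl⟩ := Finset.mem_image.1 hi
  obtain ⟨k, -, hk⟩ := Finset.mem_image.1 hi'
  refine hx (funext fun i => ?_)
  have := congrFun (Prod.ext_iff.1 (@he (_, k) (_, j) hk)).1 i
  exact (Bool.xor_left_inj.1 this.symm)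

/-- Measure of the set of points with initial segment `v` avoiding translates of `lookupZero e`. -/
lemma haarCantor_fiber_avoid
    (he : Function.Injective fun q : (Fin m → Bool) × Fin p => e q.1 q.2)
    (hm : ∀ v j, m ≤ e v j) (v : Fin m → Bool) (F : Finset (ℕ → Bool))
    (hF : Set.InjOn (initSeg m) F) :
    haarCantor {y | initSeg m y = v ∧ ∀ x ∈ F, ¬ ∀ i ∈ lookupSet e v x, y i = x i} =
      2⁻¹ ^ m * (1 - 2⁻¹ ^ p) ^ F.card := by
  classical
  induction F using Finset.induction_on with
  | empty => simpa [preimage, mem_singleton_iff] using haarCantor_initSeg_fiber m v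
  | insert a F ha ih =>
    have hdisj : Disjoint (Finset.range m ∪ F.biUnion (lookupSet e v)) (lookupSet e v a) := by
      rw [Finset.disjoint_union_left, Finset.disjoint_biUnion_left]
      refine ⟨disjoint_range_lookupSet hm v a, fun x hx => disjoint_lookupSet he v fun h => ?_⟩
      exact ha (hF (by simp [hx]) (by simp) h ▸ hx)
    have hset : {y | initSeg m y = v ∧ ∀ x ∈ insert a F, ¬ ∀ i ∈ lookupSet e v x, y i = x i} =
        {y | initSeg m y = v ∧ ∀ x ∈ F, ¬ ∀ i ∈ lookupSet e v x, y i = x i} ∩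
          {y | ∀ i ∈ lookupSet e v a, y i = a i}ᶜ := by
      ext y
      simp only [Finset.forall_mem_insert, mem_inter_iff, mem_ofPred_eq, mem_compl_iff]
      tauto
    have hD : ∀ y z : ℕ → Bool, (∀ i ∈ lookupSet e v a, y i = z i) →
        (y ∈ {y : ℕ → Bool | ∀ i ∈ lookupSet e v a, y i = a i} ↔
          z ∈ {y : ℕ → Bool | ∀ i ∈ lookupSet e v a, y i = a i}) := by
      intro y z hyz
      exact forall₂_congr fun i hi => by rw [hyz i hi]
    rw [hset, haarCantor_inter hdisj, ih (hF.mono (by simp)), Finset.card_insert_of_notMem ha,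
      prob_compl_eq_one_sub, haarCantor_eqOn, card_lookupSet he, pow_succ, mul_assoc]
    · exact measurableSet_of_finitely_determined fun y z h => (hD y z h).1
    · rintro y z hyz ⟨hv, hy⟩
      refine ⟨hv ▸ funext fun i => (hyz i (by simp)).symm, fun x hx hz => hy x hx fun i hi => ?_⟩
      rw [hyz i (Finset.mem_union_right _ (Finset.mem_biUnion.2 ⟨x, hx, hi⟩)), hz i hi]
    · exact fun y z h hy hz => hy ((hD y z h).2 hz)

lemma haarCantor_avoid
    (he : Function.Injective fun q : (Fin m → Bool) × Fin p => e q.1 q.2)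
    (hm : ∀ v j, m ≤ e v j) (F : Finset (ℕ → Bool)) (hF : Set.InjOn (initSeg m) F) :
    haarCantor {y | ∀ x ∈ F, cantorAdd x y ∉ lookupZero e} = (1 - 2⁻¹ ^ p) ^ F.card := by
  have hmeas : ∀ v, MeasurableSet (initSeg m ⁻¹' {v}) := fun v =>
    measurableSet_preimage (measurable_initSeg m) MeasurableSet.of_discrete
  have h := sum_measure_preimage_singleton
    (μ := haarCantor.restrict {y | ∀ x ∈ F, cantorAdd x y ∉ lookupZero e}) Finset.univ
    (f := initSeg m) fun v _ => hmeas v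
  rw [Finset.coe_univ, preimage_univ, Measure.restrict_apply_univ] at h
  rw [← h]
  have hv : ∀ v, haarCantor.restrict {y | ∀ x ∈ F, cantorAdd x y ∉ lookupZero e}
      (initSeg m ⁻¹' {v}) = 2⁻¹ ^ m * (1 - 2⁻¹ ^ p) ^ F.card := by
    intro v
    rw [Measure.restrict_apply (hmeas v), ← haarCantor_fiber_avoid he hm v F hF]
    congr 1
    ext y
    simp only [cantorAdd_mem_lookupZero_iff, mem_inter_iff, mem_preimage, mem_singleton_iff,
      mem_ofPred_eq]
    exact and_congr_right fun h => by rw [h]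
  simp [hv, ← mul_assoc, ← mul_pow, ENNReal.mul_inv_cancel]

lemma haarCantor_lookupZero (he : Function.Injective fun q : (Fin m → Bool) × Fin p => e q.1 q.2)
    (hm : ∀ v j, m ≤ e v j) : haarCantor (lookupZero e) = 2⁻¹ ^ p := by
  have h := haarCantor_avoid he hm {fun _ => false} (by simp)
  have h0 : ∀ y, cantorAdd (fun _ => false) y = y := fun y => by funext i; simp [cantorAdd]
  simp only [Finset.mem_singleton, forall_eq, h0, Finset.card_singleton, pow_one] at h
  have hc := prob_compl_eq_one_sub (μ := haarCantor) (isOpen_lookupZero (e := e)).measurableSet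
  rw [← ENNReal.sub_sub_cancel ENNReal.one_ne_top (prob_le_one (μ := haarCantor)), ← hc]
  change 1 - haarCantor {y | y ∉ lookupZero e} = _
  rw [h, ENNReal.sub_sub_cancel ENNReal.one_ne_top (pow_le_one₀ (by simp) (by simp))]

end lookup

/-- Every closed set of positive measure contains a nonempty closed set all of whose nonempty
relatively open subsets have positive measure. -/
lemma exists_support_piece {K : Set (ℕ → Bool)} (hK : IsClosed K) (hpos : haarCantor K ≠ 0) :
    ∃ S ⊆ K, IsClosed S ∧ S.Nonempty ∧ ∀ U, IsOpen U → (U ∩ S).Nonempty →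
      haarCantor (U ∩ S) ≠ 0 := by
  refine ⟨(haarCantor.restrict K).support, ?_, Measure.isClosed_support, ?_, ?_⟩
  · exact Measure.support_subset_of_isClosed hK (by
      rw [mem_ae_iff, Measure.restrict_apply hK.measurableSet.compl]; simp)
  · rw [Measure.nonempty_support_iff]
    simpa [Measure.restrict_eq_zero] using hpos
  · rintro U hU ⟨x, hxU, hxS⟩ h0
    have hpos' := (Measure.mem_support_iff_forall x).1 hxS U (hU.mem_nhds hxU)
    have hz : haarCantor.restrict K (U ∩ (haarCantor.restrict K).support) = 0 :=
      nonpos_iff_eq_zero.1 ((Measure.restrict_apply_le _ _).trans h0.le)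
    refine hpos'.ne' (measure_mono_null (t := (U ∩ (haarCantor.restrict K).support) ∪
      (haarCantor.restrict K).supportᶜ) ?_ (measure_union_null hz Measure.measure_compl_support))
    intro y hy
    by_cases h : y ∈ (haarCantor.restrict K).support
    · exact Or.inl ⟨hy, h⟩
    · exact Or.inr h

/-- The Baire category theorem on a closed subset of Cantor space. -/
lemma exists_isOpen_subset_of_iUnion {S : Set (ℕ → Bool)} (hS : IsClosed S) (hne : S.Nonempty)
    {F : ℕ → Set (ℕ → Bool)} (hF : ∀ n, IsClosed (F n)) (hSF : S ⊆ ⋃ n, F n) :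
    ∃ n, ∃ U ∈ TopologicalSpace.countableBasis (ℕ → Bool), (U ∩ S).Nonempty ∧ U ∩ S ⊆ F n := by
  have : CompactSpace S := isCompact_iff_compactSpace.1 hS.isCompact
  have : Nonempty S := hne.to_subtype
  obtain ⟨n, ⟨x, hxS⟩, hx⟩ := nonempty_interior_of_iUnion_of_closed
    (f := fun n => (Subtype.val ⁻¹' F n : Set S))
    (fun n => (hF n).preimage continuous_subtype_val)
    (eq_univ_of_forall fun x => by simpa using hSF x.2)
  obtain ⟨V, hVF, hV, hxV⟩ := mem_interior.1 hx
  obtain ⟨W, hW, rfl⟩ := isOpen_induced_iff.1 hV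
  obtain ⟨U, hU, hxU, hUW⟩ :=
    (TopologicalSpace.isBasis_countableBasis (ℕ → Bool)).exists_subset_of_mem_open (a := x) hxV hW
  exact ⟨n, U, hU, ⟨x, hxU, hxS⟩, fun y hy => @hVF ⟨y, hy.2⟩ (hUW hy.1)⟩

/-- A null-additive set is a countable union of pieces with few initial segments of length `f n`,
where the bound does not depend on `f`. -/
lemma exists_pieces_of_nullAdditive {X : Set (ℕ → Bool)}
    (hX : ∀ N, haarCantor N = 0 → haarCantor (Set.image2 cantorAdd X N) = 0)
    (f k : ℕ → ℕ) (hk : ∀ n, (1 - 2⁻¹ ^ n : ℝ≥0∞) ^ k n ≤ 2⁻¹ ^ n) :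
    ∃ Y : ℕ → Set (ℕ → Bool), ⋃ i, Y i = X ∧
      ∀ i, ∀ᶠ n in atTop, (initSeg (f n) '' Y i).ncard ≤ k n := by
  choose g hg using fun n => exists_injective_nat ((Fin (f n) → Bool) × Fin n)
  let e : ∀ n, (Fin (f n) → Bool) → Fin n → ℕ := fun n v j => f n + g n (v, j)
  have he : ∀ n, Function.Injective fun q : (Fin (f n) → Bool) × Fin n => e n q.1 q.2 :=
    fun n q q' h => hg n (Nat.add_left_cancel h)
  have hm : ∀ n v j, f n ≤ e n v j := fun n v j => Nat.le_add_right _ _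
  have hN : haarCantor (limsup (fun n => lookupZero (e n)) atTop) = 0 := by
    refine measure_limsup_atTop_eq_zero ?_
    simp_rw [fun n => haarCantor_lookupZero (he n) (hm n)]
    simp [ENNReal.tsum_geometric]
  obtain ⟨W, hXW, hW, hW1⟩ := Set.exists_isOpen_lt_of_lt (μ := haarCantor) _ 1
    ((hX _ hN).trans_lt one_pos)
  obtain ⟨S, hSW, hS, hSne, hSpos⟩ := exists_support_piece hW.isClosed_compl (by
    rw [prob_compl_eq_one_sub hW.measurableSet]
    exact (tsub_pos_of_lt hW1).ne')
  set Y : TopologicalSpace.countableBasis (ℕ → Bool) × ℕ → Set (ℕ → Bool) := fun q =>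
    {x ∈ X | ((q.1 : Set (ℕ → Bool)) ∩ S).Nonempty ∧
      ∀ y ∈ (q.1 : Set (ℕ → Bool)) ∩ S, ∀ n ≥ q.2, cantorAdd x y ∉ lookupZero (e n)} with hY
  have hcov : ∀ x ∈ X, ∃ q, x ∈ Y q := by
    intro x hx
    obtain ⟨m, U, hU, hne, hUF⟩ := exists_isOpen_subset_of_iUnion hS hSne
      (F := fun m => {y | ∀ n ≥ m, cantorAdd x y ∉ lookupZero (e n)}) (fun m => by
        simp only [ofPred_forall]
        exact isClosed_iInter fun n => isClosed_iInter fun _ =>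
          (isOpen_lookupZero.preimage (continuous_cantorAdd x)).isClosed_compl) (by
        intro y hy
        have : cantorAdd x y ∉ limsup (fun n => lookupZero (e n)) atTop := fun h =>
          hSW hy (hXW ⟨x, hx, _, h, cantorAdd_cantorAdd x y⟩)
        rw [mem_limsup_iff_frequently_mem, not_frequently, eventually_atTop] at this
        simpa using this)
    exact ⟨(⟨U, hU⟩, m), hx, hne, hUF⟩
  have hbound : ∀ q, ∀ᶠ n in atTop, (initSeg (f n) '' Y q).ncard ≤ k n := by
    rintro ⟨⟨U, hU⟩, m⟩
    by_cases hne : (U ∩ S).Nonempty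
    · have hpos := hSpos U ((TopologicalSpace.isBasis_countableBasis _).isOpen hU) hne
      have hsmall : ∀ᶠ n : ℕ in atTop, (2⁻¹ : ℝ≥0∞) ^ n < haarCantor (U ∩ S) :=
        (ENNReal.tendsto_pow_atTop_nhds_zero_of_lt_one (by simp)).eventually_lt_const
          (pos_iff_ne_zero.2 hpos)
      filter_upwards [hsmall, eventually_ge_atTop m] with n hn hmn
      by_contra! hlt
      obtain ⟨s, hs, hbij⟩ := Set.exists_subset_bijOn (Y (⟨U, hU⟩, m)) (initSeg (f n))
      have hfin : s.Finite := (hbij.finite_iff_finite).2 (Set.toFinite _)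
      lift s to Finset (ℕ → Bool) using hfin
      rw [← hbij.image_eq, hbij.injOn.ncard_image, Set.ncard_coe_finset] at hlt
      refine hn.not_ge (le_trans ?_ (hk n))
      have hsub : U ∩ S ⊆ {y | ∀ x ∈ s, cantorAdd x y ∉ lookupZero (e n)} :=
        fun y hy x hx => (hs hx).2.2 y hy n hmn
      refine (measure_mono hsub).trans ((haarCantor_avoid (he n) (hm n) s hbij.injOn).le.trans ?_)
      exact pow_le_pow_of_le_one zero_le tsub_le_self hlt.le
    · have : Y (⟨U, hU⟩, m) = ∅ := by
        ext x; simp [hY, hne]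
      simp [this]
  have hbne : Nonempty (TopologicalSpace.countableBasis (ℕ → Bool) × ℕ) := by
    obtain ⟨-, U, hU, -⟩ := exists_isOpen_subset_of_iUnion hS hSne
      (F := fun _ => univ) (fun _ => isClosed_univ)
      fun _ _ => mem_iUnion.2 ⟨0, trivial⟩
    exact ⟨⟨U, hU⟩, 0⟩
  obtain ⟨c, hc⟩ := exists_surjective_nat (TopologicalSpace.countableBasis (ℕ → Bool) × ℕ)
  refine ⟨fun i => Y (c i), ?_, fun i => hbound (c i)⟩
  refine subset_antisymm (iUnion_subset fun i x hx => hx.1) fun x hx => ?_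
  obtain ⟨q, hq⟩ := hcov x hx
  obtain ⟨i, rfl⟩ := hc q
  exact mem_iUnion.2 ⟨i, hq⟩

lemma covNum_le_ncard_initSeg (E : Set (ℕ → Bool)) {m : ℕ} {δ : ℝ≥0∞}
    (hδ : ENNReal.ofReal ((1 / 2 : ℝ) ^ m) ≤ δ) : covNum E δ ≤ (initSeg m '' E).ncard := by
  classical
  let T : Finset (Fin m → Bool) := (Set.toFinite (initSeg m '' E)).toFinset
  have hcov : covNum E δ ≤ ((T.image fun v => initSeg m ⁻¹' {v}).card : ℕ∞) := by
    refine sInf_le ⟨_, ⟨fun x hx => ?_, ?_⟩, rfl⟩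
    · simp only [Finset.mem_image, mem_iUnion, exists_prop]
      exact ⟨_, ⟨initSeg m x, by simpa [T] using ⟨x, hx, rfl⟩, rfl⟩, rfl⟩
    · simp only [Finset.mem_image, forall_exists_index, and_imp]
      rintro _ v - rfl
      exact (ediam_initSeg_fiber_le m v).trans hδ
  refine hcov.trans ?_
  rw [Set.ncard_eq_toFinset_card _ (Set.toFinite _)]
  exact_mod_cast Finset.card_image_le

lemma exists_pow_one_sub_le (n : ℕ) : ∃ k : ℕ, (1 - 2⁻¹ ^ n : ℝ≥0∞) ^ k ≤ 2⁻¹ ^ n := by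
  have hlt : (1 - 2⁻¹ ^ n : ℝ≥0∞) < 1 :=
    ENNReal.sub_lt_self ENNReal.one_ne_top one_ne_zero (by simp)
  exact (((ENNReal.tendsto_pow_atTop_nhds_zero_of_lt_one hlt).eventually_lt_const
    (ENNReal.pow_pos (by simp) n : (0 : ℝ≥0∞) < 2⁻¹ ^ n)).exists).imp fun _ h => h.le

lemma IsHausdorffFn.eventually_le {h : ℝ → ℝ} (hh : IsHausdorffFn h) {c : ℝ} (hc : 0 < c) :
    ∃ N : ℕ, h ((1 / 2) ^ N) ≤ c := by
  obtain ⟨-, -, hcont, hzero⟩ := hh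
  have h0 : h 0 = 0 := (hzero 0 le_rfl).2 rfl
  have ht : Tendsto (fun N : ℕ => ((1 / 2 : ℝ)) ^ N) atTop (𝓝[≥] 0) :=
    tendsto_nhdsWithin_iff.2 ⟨tendsto_pow_atTop_nhds_zero_of_lt_one (by norm_num) (by norm_num),
      Eventually.of_forall fun N => by simp⟩
  have := (hcont 0 le_rfl).tendsto.comp ht
  rw [h0] at this
  exact ((this.eventually_lt_const hc).exists).imp fun _ h => h.le

/-- If `X ⊆ 2^ℕ` is null-additive (w.r.t. the Haar/product measure, which is `H^1`), then
for every Hausdorff function `h`, `X` is a countable increasing union of sets `Xₙ` with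
`limsup_{r→0} N_{Xₙ}(r)·h(r) ≤ 1`. -/
theorem stmt17 (X : Set (ℕ → Bool))
    (hX : ∀ N : Set (ℕ → Bool), hMeas (fun r => r) N = 0 →
      hMeas (fun r => r)
        (Set.image2 (fun x y : ℕ → Bool => fun i => xor (x i) (y i)) X N) = 0) :
    ∀ h : ℝ → ℝ, IsHausdorffFn h →
      ∃ Xn : ℕ → Set (ℕ → Bool), Monotone Xn ∧ (⋃ n, Xn n) = X ∧
        ∀ n, ubox0 (Xn n) h ≤ 1 := by
  intro h hh
  have hX' : ∀ N, haarCantor N = 0 → haarCantor (Set.image2 cantorAdd X N) = 0 := by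
    rw [hMeas_id_eq] at hX
    exact hX
  choose k hk using exists_pow_one_sub_le
  choose g hg using fun n : ℕ =>
    hh.eventually_le (c := 1 / ((n + 1) * (k (n + 1) + 1))) (by positivity)
  let f : ℕ → ℕ := fun n => n + g n
  have hhf : ∀ n, h ((1 / 2) ^ f n) ≤ 1 / ((n + 1) * (k (n + 1) + 1)) := fun n =>
    (hh.2.1 (mem_Ici.2 (by positivity)) (mem_Ici.2 (by positivity))
      (pow_le_pow_of_le_one (by norm_num) (by norm_num) (Nat.le_add_left _ _))).trans (hg n)
  obtain ⟨Y, hYX, hY⟩ := exists_pieces_of_nullAdditive hX' f k hk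
  refine ⟨fun j => ⋃ i ∈ Finset.range (j + 1), Y i, ?_, ?_, fun j => ?_⟩
  · intro a b hab
    exact biUnion_mono (fun i hi => by simp at hi ⊢; omega) fun _ _ => le_rfl
  · rw [← hYX]
    refine subset_antisymm (iUnion_subset fun j => iUnion₂_subset fun i _ => subset_iUnion Y i) ?_
    exact iUnion_subset fun i => subset_iUnion_of_subset i
      (subset_biUnion_of_mem (u := Y) (by simp))
  have hcard : ∀ᶠ n in atTop,
      (initSeg (f n) '' ⋃ i ∈ Finset.range (j + 1), Y i).ncard ≤ (j + 1) * k n := by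
    filter_upwards [(Finset.range (j + 1)).eventually_all.2 fun i _ => hY i] with n hn
    rw [image_iUnion₂]
    refine (Finset.set_ncard_biUnion_le _ _).trans ((Finset.sum_le_sum hn).trans ?_)
    simp
  obtain ⟨M, hM⟩ := eventually_atTop.1 hcard
  refine limsup_le_of_le (by isBoundedDefault) ?_
  have hsmall : ∀ᶠ r : ℝ in 𝓝[>] 0, ∀ i ∈ Finset.range (max M j + 1), r < (1 / 2) ^ f i :=
    (Finset.range _).eventually_all.2 fun i _ =>
      eventually_nhdsWithin_of_eventually_nhds (eventually_lt_nhds (by positivity))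
  filter_upwards [hsmall, self_mem_nhdsWithin] with r hr hr0
  have hr0 : 0 < r := hr0
  have hex : ∃ n, (1 / 2 : ℝ) ^ f n ≤ r := by
    obtain ⟨n, hn⟩ := exists_pow_lt_of_lt_one hr0 (by norm_num : (1 / 2 : ℝ) < 1)
    exact ⟨n, (pow_le_pow_of_le_one (by norm_num) (by norm_num) (Nat.le_add_right _ _)).trans
      hn.le⟩
  classical
  have hlarge : max M j < Nat.find hex := by
    by_contra! hle
    exact (hr _ (Finset.mem_range.2 (Nat.lt_succ_of_le hle))).not_ge (Nat.find_spec hex)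
  obtain ⟨n, hn⟩ := Nat.exists_eq_succ_of_ne_zero (Nat.ne_zero_of_lt hlarge)
  have hrn : r < (1 / 2) ^ f n := not_le.1 (Nat.find_min hex (m := n) (by omega))
  have hnr := Nat.find_spec hex
  rw [hn] at hnr hlarge
  have hcov : covNum (⋃ i ∈ Finset.range (j + 1), Y i) (ENNReal.ofReal r) ≤
      (((j + 1) * k (n + 1) : ℕ) : ℕ∞) :=
    (covNum_le_ncard_initSeg _ (ENNReal.ofReal_le_ofReal hnr)).trans
      (by exact_mod_cast hM (n + 1) (by omega))
  have hhr : h r ≤ 1 / ((n + 1) * (k (n + 1) + 1)) :=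
    (hh.2.1 (mem_Ici.2 hr0.le) (mem_Ici.2 (by positivity)) hrn.le).trans (hhf n)
  refine (mul_le_mul' (ENat.toENNReal_le.2 hcov) (ENNReal.ofReal_le_ofReal hhr)).trans ?_
  rw [ENat.toENNReal_coe, ← ENNReal.ofReal_natCast, ← ENNReal.ofReal_mul (by positivity)]
  refine ENNReal.ofReal_le_one.2 ?_
  rw [mul_one_div, div_le_one (by positivity)]
  push_cast
  have hjn : (j : ℝ) ≤ n := by exact_mod_cast (show j ≤ n by omega)
  gcongr
  simp
end
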